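/- arXiv:1210.4328 — 5 statements merged into one kernel-verified Lean document; each statement's English description precedes it below -/
import Mathlib

section
/- Let W be a group acting on a tree T such that all vertex stabilizers are finite, and let s₁, s₂, s₀ be elements of order 2 in W. Suppose ⟨s₁, s₂⟩ is infinite, the fixed-point sets Fix(s₁) and Fix(s₂) in T are nonempty and disjoint, and the pointwise stabilizer of the unique edge e joining Fix(s₁) to Fix(s₂) is ⟨s₀⟩ of order 2. Then s₀ is the unique nontrivial element x ∈ W such that both ⟨x, s₁⟩ and ⟨x, s₂⟩ are finite. -/
open SimpleGraph in
theorem aux_A {V : Type*} {T : SimpleGraph V} (hT : T.IsTree) {u v w w' : V}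
    (h : T.dist u w + T.dist w v = T.dist u v) (h' : T.dist u w' + T.dist w' v = T.dist u v)
    (hd : T.dist u w = T.dist u w') : w = w' := by
  obtain ⟨p, hp⟩ := hT.connected.exists_walk_length_eq_dist u w
  obtain ⟨q, hq⟩ := hT.connected.exists_walk_length_eq_dist w v
  obtain ⟨p', hp'⟩ := hT.connected.exists_walk_length_eq_dist u w'
  obtain ⟨q', hq'⟩ := hT.connected.exists_walk_length_eq_dist w' v
  have h1 : (p.append q).IsPath := Walk.isPath_of_length_eq_dist _ (by
    rw [Walk.length_append]; omega)
  have h2 : (p'.append q').IsPath := Walk.isPath_of_length_eq_dist _ (by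
    rw [Walk.length_append]; omega)
  have h3 : p.append q = p'.append q' :=
    congrArg Subtype.val (hT.isAcyclic.path_unique ⟨_, h1⟩ ⟨_, h2⟩)
  have e1 : (p.append q).getVert (T.dist u w) = w := by
    rw [Walk.getVert_append, ← hp]; simp
  have e2 : (p'.append q').getVert (T.dist u w) = w' := by
    rw [Walk.getVert_append, hd, ← hp']; simp
  rw [← e1, h3, e2]

theorem aux_pm {V : Type*} {T : SimpleGraph V} (hT : T.IsTree) (u : V) {e f : V}
    (h : T.Adj e f) : T.dist u f = T.dist u e + 1 ∨ T.dist u e = T.dist u f + 1 := by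
  have h1 := hT.dist_ne_of_adj u h
  have h2 := hT.connected.dist_triangle (u := u) (v := e) (w := f)
  have h3 := hT.connected.dist_triangle (u := u) (v := f) (w := e)
  have h4 := SimpleGraph.dist_eq_one_iff_adj.mpr h
  have h5 := SimpleGraph.dist_eq_one_iff_adj.mpr h.symm
  omega

theorem aux_C {V : Type*} {T : SimpleGraph V} (hT : T.IsTree) {u m a b : V}
    (ha : T.Adj m a) (hb : T.Adj m b) (h : T.dist u m = T.dist u a + 1)
    (h' : T.dist u m = T.dist u b + 1) : a = b := by
  have h4 := SimpleGraph.dist_eq_one_iff_adj.mpr ha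
  have h5 := SimpleGraph.dist_eq_one_iff_adj.mpr hb
  apply aux_A hT (u := m) (v := u)
  · rw [T.dist_comm (u := a), T.dist_comm (u := m) (v := u)]; omega
  · rw [T.dist_comm (u := b), T.dist_comm (u := m) (v := u)]; omega
  · omega

theorem aux_nb {V : Type*} {T : SimpleGraph V} (hT : T.IsTree) {u e : V} (h : u ≠ e) :
    ∃ e', T.Adj e e' ∧ T.dist u e = T.dist u e' + 1 := by
  obtain ⟨p, hp⟩ := hT.connected.exists_walk_length_eq_dist e u
  cases p with
  | nil => exact absurd rfl h
  | @cons _ e' _ ha q =>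
    refine ⟨e', ha, ?_⟩
    have h1 := SimpleGraph.dist_le q
    have h2 := aux_pm hT u ha
    rw [SimpleGraph.Walk.length_cons] at hp
    rw [T.dist_comm (u := e') (v := u)] at h1
    rw [T.dist_comm (u := e) (v := u)] at hp
    omega

theorem aux_B {V : Type*} {T : SimpleGraph V} (hT : T.IsTree) {u v : V} (n : ℕ) :
    ∀ e f : V, T.dist u e = n → T.Adj e f → T.dist u f = T.dist u e + 1 →
      T.dist v e = T.dist v f + 1 → T.dist u v = T.dist u e + 1 + T.dist f v := by
  induction n with
  | zero =>
    intro e f hn ha h1 h2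
    have : u = e := hT.connected.dist_eq_zero_iff.mp hn
    subst this
    rw [T.dist_comm (u := u) (v := v), T.dist_comm (u := f) (v := v)]
    omega
  | succ n ih =>
    intro e f hn ha h1 h2
    have hne : u ≠ e := by
      rintro rfl
      simp at hn
    obtain ⟨e', he', hd⟩ := aux_nb hT hne
    rcases aux_pm hT v he' with h3 | h3
    · have := ih e' e (by omega) he'.symm hd h3
      rw [T.dist_comm (u := e) (v := v)] at this
      rw [T.dist_comm (u := f) (v := v)]
      omega
    · have := aux_C hT ha he' h2 h3
      subst this
      omega

theorem aux_iso {V : Type*} {T : SimpleGraph V} (hT : T.IsTree)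
    {W : Type*} [Group W] [MulAction W V]
    (hact : ∀ (w : W) (u v : V), T.Adj u v → T.Adj (w • u) (w • v)) (w : W) (u v : V) :
    T.dist (w • u) (w • v) = T.dist u v := by
  have key : ∀ (w : W) (u v : V), T.dist (w • u) (w • v) ≤ T.dist u v := by
    intro w u v
    obtain ⟨p, hp⟩ := hT.connected.exists_walk_length_eq_dist u v
    let φ : T →g T := ⟨fun z => w • z, fun {a b} h => hact w a b h⟩
    have := SimpleGraph.dist_le (p.map φ)
    rw [SimpleGraph.Walk.length_map, hp] at this
    exact this
  apply le_antisymm (key w u v)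
  have := key w⁻¹ (w • u) (w • v)
  simpa using this

theorem aux_D {V : Type*} {T : SimpleGraph V} (hT : T.IsTree)
    {W : Type*} [Group W] [MulAction W V]
    (hact : ∀ (w : W) (u v : V), T.Adj u v → T.Adj (w • u) (w • v))
    (H : Subgroup W) [Finite H] (v0 : V) :
    ∃ a : V, ∀ h ∈ H, ∀ k ∈ H, h • a = k • a ∨ T.Adj (h • a) (k • a) := by
  classical
  haveI := Fintype.ofFinite H
  let f : V → ℕ := fun v => Finset.univ.sup (fun h : H => T.dist v ((h : W) • v0))
  haveI : Nonempty V := ⟨v0⟩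
  obtain ⟨a, ha⟩ : ∃ a, ∀ b, f a ≤ f b := ⟨Function.argmin f, fun b => Function.argmin_le f b⟩
  have hinv : ∀ k ∈ H, f (k • a) ≤ f a := by
    intro k hk
    apply Finset.sup_le
    intro h _
    have e : T.dist (k • a) ((h : W) • v0) = T.dist a ((k⁻¹ * h : W) • v0) := by
      rw [← aux_iso hT hact k a, smul_smul, mul_inv_cancel_left]
    rw [e]
    exact Finset.le_sup (f := fun h : H => T.dist a ((h : W) • v0))
      (Finset.mem_univ (⟨k⁻¹ * h, H.mul_mem (H.inv_mem hk) h.2⟩ : H))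
  refine ⟨a, fun h hh k hk => ?_⟩
  by_contra! hcon
  obtain ⟨hne, hna⟩ := hcon
  obtain ⟨m, hm, hd⟩ := aux_nb hT hne.symm
  have hmb : m ≠ k • a := by rintro rfl; exact hna hm
  have hpos := hT.connected.pos_dist_of_ne hmb
  have hlt : f m < f a := by
    obtain ⟨z, _, hz⟩ := Finset.exists_mem_eq_sup (Finset.univ : Finset H) Finset.univ_nonempty
      (fun h : H => T.dist m ((h : W) • v0))
    have hz' : f m = T.dist ((z : W) • v0) m := by rw [T.dist_comm]; exact hz
    have q1 : T.dist ((z : W) • v0) (h • a) ≤ f a := by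
      rw [T.dist_comm]
      exact (Finset.le_sup (f := fun z : H => T.dist (h • a) ((z : W) • v0))
        (Finset.mem_univ z)).trans (hinv h hh)
    have q2 : T.dist ((z : W) • v0) (k • a) ≤ f a := by
      rw [T.dist_comm]
      exact (Finset.le_sup (f := fun z : H => T.dist (k • a) ((z : W) • v0))
        (Finset.mem_univ z)).trans (hinv k hk)
    rw [hz']
    rcases aux_pm hT ((z : W) • v0) hm with h3 | h3
    · have := aux_B hT _ _ _ rfl hm h3 hd
      omega
    · omega
  exact absurd (ha m) (by omega)

theorem aux_F {V : Type*} {T : SimpleGraph V} (hT : T.IsTree)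
    {W : Type*} [Group W] [MulAction W V]
    (hact : ∀ (w : W) (u v : V), T.Adj u v → T.Adj (w • u) (w • v)) {s : W} {c : V}
    (hc : s • c = c) (a : V) : ¬ T.Adj a (s • a) := by
  intro h
  apply hT.dist_ne_of_adj c h
  conv_rhs => rw [← hc]
  rw [aux_iso hT hact]

/-- structure of a finite group generated by `x` and an elliptic `s` -/
theorem aux_G {V : Type*} {T : SimpleGraph V} (hT : T.IsTree)
    {W : Type*} [Group W] [MulAction W V]
    (hact : ∀ (w : W) (u v : V), T.Adj u v → T.Adj (w • u) (w • v)) {s x : W} {c : V}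
    (hc : s • c = c) (hfin : Finite (Subgroup.closure {x, s} : Subgroup W)) :
    ∃ a : V, s • a = a ∧ (x • a = a ∨ (T.Adj a (x • a) ∧ s • x • a = x • a ∧ x • x • a = a)) := by
  obtain ⟨a, ha⟩ := aux_D hT hact (Subgroup.closure {x, s}) c
  have hx : x ∈ Subgroup.closure {x, s} := Subgroup.subset_closure (by simp)
  have hs : s ∈ Subgroup.closure {x, s} := Subgroup.subset_closure (by simp)
  have h1 := Subgroup.one_mem (Subgroup.closure {x, s})
  refine ⟨a, ?_, ?_⟩
  · rcases ha 1 h1 s hs with h | h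
    · simpa using h.symm
    · rw [one_smul] at h
      exact absurd h (aux_F hT hact hc a)
  · rcases ha 1 h1 x hx with h | h
    · left; simpa using h.symm
    · rw [one_smul] at h
      refine Or.inr ⟨h, ?_, ?_⟩
      · rcases ha x hx (s * x) (mul_mem hs hx) with h' | h'
        · rw [mul_smul] at h'; exact h'.symm
        · rw [mul_smul] at h'
          exact absurd h' (aux_F hT hact hc _)
      · rcases ha 1 h1 (x * x) (mul_mem hx hx) with h' | h'
        · rw [mul_smul, one_smul] at h'; exact h'.symm
        · rw [mul_smul, one_smul] at h'
          have h4 := SimpleGraph.dist_eq_one_iff_adj.mpr h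
          have h5 := SimpleGraph.dist_eq_one_iff_adj.mpr h'
          exact absurd (h4.trans h5.symm) (hT.dist_ne_of_adj a (hact x _ _ h))

theorem aux_inv {V : Type*} {T : SimpleGraph V} (hT : T.IsTree)
    {W : Type*} [Group W] [MulAction W V]
    (hact : ∀ (w : W) (u v : V), T.Adj u v → T.Adj (w • u) (w • v)) {x : W} {a b : V}
    (ha : T.Adj a (x • a)) (haa : x • x • a = a) (hb : T.Adj b (x • b))
    (h : T.dist b (x • a) = T.dist b a + 1) : b = a := by
  have e1 := aux_iso hT hact x b (x • a)
  rw [haa] at e1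
  have e2 := aux_iso hT hact x b a
  have h3 := aux_B hT (u := b) (v := x • b) _ _ _ rfl ha h (by omega)
  have h4 := SimpleGraph.dist_eq_one_iff_adj.mpr hb
  exact hT.connected.dist_eq_zero_iff.mp (by omega)


/-- Let `W` act on a tree `T` with finite vertex stabilizers, let `s₁, s₂, s₀` be involutions
with `⟨s₁, s₂⟩` infinite, `Fix(s₁)` and `Fix(s₂)` nonempty and disjoint, and suppose the
pointwise stabilizer of the unique edge `e = (e₁, e₂)` joining `Fix(s₁)` to `Fix(s₂)` is `⟨s₀⟩`
of order 2.  Then `s₀` is the unique nontrivial element `x` of `W` such that both `⟨x, s₁⟩`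
and `⟨x, s₂⟩` are finite. -/
theorem stmt_9 {V : Type*} (T : SimpleGraph V) (hT : T.IsTree)
    {W : Type*} [Group W] [MulAction W V]
    (hact : ∀ (w : W) (u v : V), T.Adj u v → T.Adj (w • u) (w • v))
    (hstab : ∀ v : V, Finite (MulAction.stabilizer W v))
    (s₁ s₂ s₀ : W)
    (h1 : orderOf s₁ = 2) (h2 : orderOf s₂ = 2) (h0 : orderOf s₀ = 2)
    (hinf : Infinite (Subgroup.closure {s₁, s₂} : Subgroup W))
    (hne1 : {v : V | s₁ • v = v}.Nonempty) (hne2 : {v : V | s₂ • v = v}.Nonempty)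
    (hdisj : Disjoint {v : V | s₁ • v = v} {v : V | s₂ • v = v})
    (e₁ e₂ : V) (hadj : T.Adj e₁ e₂)
    (he₁ : s₁ • e₁ = e₁) (he₂ : s₂ • e₂ = e₂)
    (huniq : ∀ u v : V, T.Adj u v → s₁ • u = u → s₂ • v = v → u = e₁ ∧ v = e₂)
    (hstab0 : {w : W | w • e₁ = e₁ ∧ w • e₂ = e₂} = (Subgroup.closure {s₀} : Set W)) :
    s₀ ≠ 1 ∧ Finite (Subgroup.closure {s₀, s₁} : Subgroup W) ∧
      Finite (Subgroup.closure {s₀, s₂} : Subgroup W) ∧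
      ∀ x : W, x ≠ 1 → Finite (Subgroup.closure {x, s₁} : Subgroup W) →
        Finite (Subgroup.closure {x, s₂} : Subgroup W) → x = s₀ := by
  have hD : ∀ v : V, s₁ • v = v → s₂ • v = v → False := fun v p q =>
    Set.disjoint_left.mp hdisj p q
  have hmem : s₀ • e₁ = e₁ ∧ s₀ • e₂ = e₂ := by
    have : s₀ ∈ {w : W | w • e₁ = e₁ ∧ w • e₂ = e₂} := by
      rw [hstab0]; exact Subgroup.subset_closure rfl
    exact this
  have hfin : ∀ (s : W) (e : V), s • e = e → s₀ • e = e →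
      Finite (Subgroup.closure {s₀, s} : Subgroup W) := by
    intro s e p q
    have hle : Subgroup.closure {s₀, s} ≤ MulAction.stabilizer W e := by
      rw [Subgroup.closure_le]
      rintro y (rfl | rfl)
      · exact q
      · exact p
    haveI := hstab e
    exact Finite.of_injective _ (Subgroup.inclusion_injective hle)
  refine ⟨?_, hfin s₁ e₁ he₁ hmem.1, hfin s₂ e₂ he₂ hmem.2, ?_⟩
  · rintro rfl
    simp at h0
  intro x hx hf1 hf2
  obtain ⟨a, ha, ha'⟩ := aux_G hT hact he₁ hf1
  obtain ⟨b, hb, hb'⟩ := aux_G hT hact he₂ hf2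
  have hfix : x • a = a ∧ x • b = b := by
    rcases ha' with ha' | ⟨ha1, ha2, ha3⟩
    · rcases hb' with hb' | ⟨hb1, -, -⟩
      · exact ⟨ha', hb'⟩
      · exact absurd hb1 (aux_F hT hact ha' b)
    · rcases hb' with hb' | ⟨hb1, -, -⟩
      · exact absurd ha1 (aux_F hT hact hb' a)
      · exfalso
        rcases aux_pm hT b ha1 with h | h
        · have := aux_inv hT hact ha1 ha3 hb1 h
          subst this
          exact hD _ ha hb
        · have := aux_inv hT hact (a := x • a) (by rw [ha3]; exact ha1.symm)
            (by rw [ha3]) hb1 (by rw [ha3]; exact h)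
          subst this
          exact hD _ ha2 hb
  have d1 : T.dist a e₂ = T.dist a e₁ + 1 := by
    rcases aux_pm hT a hadj with h | h
    · exact h
    · exfalso
      have k := hact s₁ _ _ hadj
      rw [he₁] at k
      have i := aux_iso hT hact s₁ a e₂
      rw [ha] at i
      exact hD e₂ (aux_C hT k hadj (by omega) h) he₂
  have d2 : T.dist b e₁ = T.dist b e₂ + 1 := by
    rcases aux_pm hT b hadj.symm with h | h
    · exact h
    · exfalso
      have k := hact s₂ _ _ hadj.symm
      rw [he₂] at k
      have i := aux_iso hT hact s₂ b e₁
      rw [hb] at i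
      exact hD e₁ he₁ (aux_C hT k hadj.symm (by omega) h)
  have dd := aux_B hT _ _ _ rfl hadj d1 d2
  have c1 := T.dist_comm (u := e₁) (v := b)
  have c2 := T.dist_comm (u := e₂) (v := b)
  have i1 := aux_iso hT hact x a e₁
  have i2 := aux_iso hT hact x a e₂
  have i3 := aux_iso hT hact x e₁ b
  have i4 := aux_iso hT hact x e₂ b
  rw [hfix.1] at i1 i2
  rw [hfix.2] at i3 i4
  have f1 : x • e₁ = e₁ := aux_A hT (u := a) (v := b) (by omega) (by omega) i1
  have f2 : x • e₂ = e₂ := aux_A hT (u := a) (v := b) (by omega) (by omega) i2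
  have hxm : x ∈ Subgroup.closure {s₀} := by
    have : x ∈ (Subgroup.closure {s₀} : Set W) := by rw [← hstab0]; exact ⟨f1, f2⟩
    exact this
  obtain ⟨n, rfl⟩ := Subgroup.mem_closure_singleton.mp hxm
  have hsq : s₀ ^ (2 : ℤ) = 1 := by
    have := pow_orderOf_eq_one s₀
    rw [h0] at this
    exact_mod_cast this
  rcases Int.even_or_odd' n with ⟨k, rfl | rfl⟩
  · exact absurd (by rw [zpow_mul, hsq, one_zpow]) hx
  · rw [zpow_add, zpow_mul, hsq, one_zpow, one_mul, zpow_one]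
end

section
/- Let W be a Coxeter group with Coxeter generating set S, let J ⊆ S, and let w be the product of all elements of J in some fixed order (each element occurring exactly once). Then the parabolic closure of w equals W_J; in particular, w is not contained in W_I for any proper subset I ⊊ J, nor in any conjugate of W_I with |I| < |J|. -/
/-- The standard parabolic subgroup of a Coxeter system on the subset `J` of the
index set. -/
def stdParabolic {B W : Type*} [Group W] {M : CoxeterMatrix B}
    (cs : CoxeterSystem M W) (J : Set B) : Subgroup W :=
  Subgroup.closure (cs.simple '' J)

/-- A parabolic subgroup is a conjugate of a standard parabolic subgroup. -/
def IsParabolic {B W : Type*} [Group W] {M : CoxeterMatrix B}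
    (cs : CoxeterSystem M W) (P : Subgroup W) : Prop :=
  ∃ (J : Set B) (w : W), ∀ x : W, x ∈ P ↔ w⁻¹ * x * w ∈ stdParabolic cs J

namespace CoxAux

open CoxeterSystem Polynomial.Chebyshev

variable {B W : Type*} [Group W] {M : CoxeterMatrix B}

/-! ### The geometric representation -/

/-- The coroot functional on `B →₀ ℝ`. -/
noncomputable def corootFn (M : CoxeterMatrix B) (i : B) : Module.Dual ℝ (B →₀ ℝ) :=
  Finsupp.linearCombination ℝ (fun j => -2 * Real.cos (Real.pi / (M i j : ℝ)))

theorem corootFn_single (M : CoxeterMatrix B) (i j : B) :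
    corootFn M i (Finsupp.single j 1) = -2 * Real.cos (Real.pi / (M i j : ℝ)) := by
  simp [corootFn]

theorem corootFn_self (M : CoxeterMatrix B) (i : B) :
    corootFn M i (Finsupp.single i 1) = 2 := by
  simp [corootFn_single]

/-- Simple reflections of the geometric representation. -/
noncomputable def geomRefl (M : CoxeterMatrix B) (i : B) : (B →₀ ℝ) ≃ₗ[ℝ] (B →₀ ℝ) :=
  Module.reflection (corootFn_self M i)

theorem S_zero_even (k : ℤ) (θ : ℝ) (hs : Real.sin θ ≠ 0) (hk : (k : ℝ) * θ = Real.pi) :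
    (S ℝ (k - 1)).eval (2 * Real.cos θ) = 0 := by
  have h := S_two_mul_real_cos θ (k - 1)
  push_cast at h
  rw [sub_add_cancel, hk, Real.sin_pi] at h
  exact (mul_eq_zero.mp h).resolve_right hs

theorem S_zero_odd (k : ℤ) (θ : ℝ) (hs : Real.sin θ ≠ 0)
    (hk : (2 * (k : ℝ) + 1) * θ = 2 * Real.pi) :
    (S ℝ k).eval (2 * Real.cos θ) + (S ℝ (k - 1)).eval (2 * Real.cos θ) = 0 := by
  have h := S_two_mul_real_cos θ (k - 1)
  have h' := S_two_mul_real_cos θ k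
  push_cast at h h'
  rw [sub_add_cancel] at h
  have e : ((k : ℝ) + 1) * θ = 2 * Real.pi - k * θ := by linarith
  rw [e, Real.sin_two_pi_sub] at h'
  have : ((S ℝ k).eval (2 * Real.cos θ) + (S ℝ (k - 1)).eval (2 * Real.cos θ)) * Real.sin θ = 0 := by
    rw [add_mul, h, h']; ring
  exact (mul_eq_zero.mp this).resolve_right hs

theorem geomRefl_liftable (M : CoxeterMatrix B) : M.IsLiftable (geomRefl M) := by
  intro i j
  by_cases hij : i = j
  · subst hij
    rw [M.diagonal, pow_one]
    ext1 z
    exact Module.involutive_reflection (corootFn_self M i) z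
  rcases Nat.eq_zero_or_pos (M i j) with h0 | hpos
  · rw [h0, pow_zero]
  have h1 : M i j ≠ 1 := M.off_diagonal i j hij
  have hsym : M j i = M i j := M.symmetric j i
  ext1 z
  rw [geomRefl, geomRefl]
  rw [Module.reflection_mul_reflection_pow_apply (corootFn_self M i) (corootFn_self M j) (M i j) z
    _ rfl]
  rw [corootFn_single, corootFn_single, hsym]
  generalize hm : M i j = m at *
  by_cases h2 : m = 2
  · subst h2
    simp
    norm_num
    abel
  have h3 : 3 ≤ m := by omega
  have hm0 : (m : ℝ) ≠ 0 := by positivity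
  have ht : -2 * Real.cos (Real.pi / (m : ℝ)) * (-2 * Real.cos (Real.pi / (m : ℝ))) - 2
      = 2 * Real.cos (2 * Real.pi / m) := by
    rw [mul_div_assoc, Real.cos_two_mul]; ring
  rw [ht]
  have hs : Real.sin (2 * Real.pi / m) ≠ 0 := by
    apply ne_of_gt
    apply Real.sin_pos_of_pos_of_lt_pi
    · positivity
    · rw [div_lt_iff₀ (by positivity)]
      have : (3 : ℝ) ≤ m := by exact_mod_cast h3
      nlinarith [Real.pi_pos]
  rcases Nat.even_or_odd' m with ⟨k, hk | hk⟩
  · have e1 : ((m : ℤ) - 2) / 2 = (k : ℤ) - 1 := by omega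
    have e2 : ((m : ℤ) - 1) / 2 = (k : ℤ) - 1 := by omega
    have := S_zero_even (k : ℤ) (2 * Real.pi / m) hs (by
      have hk0 : (k : ℝ) ≠ 0 := by
        have : k ≠ 0 := by omega
        exact_mod_cast this
      rw [hk]; push_cast; field_simp)
    rw [e1, e2, this]
    simp
  · have e1 : ((m : ℤ) - 2) / 2 = (k : ℤ) - 1 := by omega
    have e2 : ((m : ℤ) - 1) / 2 = (k : ℤ) := by omega
    have e3 : ((m : ℤ) - 3) / 2 = (k : ℤ) - 1 := by omega
    have e4 : (m : ℤ) / 2 = (k : ℤ) := by omega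
    have := S_zero_odd (k : ℤ) (2 * Real.pi / m) hs (by
      rw [hk] at hm0 ⊢; push_cast at hm0 ⊢; field_simp)
    rw [e1, e2, e3, e4, this]
    simp

theorem simple_not_mem (cs : CoxeterSystem M W) (J : Set B) (b : B) (hb : b ∉ J) :
    cs.simple b ∉ stdParabolic cs J := by
  intro h
  let ρ := cs.lift ⟨geomRefl M, geomRefl_liftable M⟩
  have hρ : ∀ i, ρ (cs.simple i) = geomRefl M i := fun i =>
    cs.lift_apply_simple (geomRefl_liftable M) i
  have key : ∀ w ∈ stdParabolic cs J, ∀ z : B →₀ ℝ, (ρ w z) b = z b := by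
    intro w hw
    induction hw using Subgroup.closure_induction with
    | mem x hx =>
      obtain ⟨j, hj, rfl⟩ := hx
      intro z
      have hjb : j ≠ b := fun h => hb (h ▸ hj)
      rw [hρ, geomRefl, Module.reflection_apply]
      simp [Finsupp.single_apply, hjb]
    | one => intro z; simp
    | mul x y _ _ hx hy => intro z; rw [map_mul, LinearEquiv.mul_apply, hx, hy]
    | inv x _ hx =>
      intro z
      rw [← hx, ← LinearEquiv.mul_apply, ← map_mul]
      simp
  have := key _ h (Finsupp.single b 1)
  rw [hρ, geomRefl, Module.reflection_apply_self] at this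
  simp at this
  norm_num at this

/-! ### The reflection cocycle -/

open Classical in
/-- Signed conjugation action of a simple reflection. -/
noncomputable def actFn (cs : CoxeterSystem M W) (i : B) : Function.End (W × ZMod 2) :=
  fun p => (cs.simple i * p.1 * cs.simple i, p.2 + if p.1 = cs.simple i then 1 else 0)

open Classical in
theorem actFn_pow (cs : CoxeterSystem M W) (i j : B) (n : ℕ) (r : W) (e : ZMod 2) :
    ((actFn cs i * actFn cs j) ^ n) (r, e) =
      ((cs.simple i * cs.simple j) ^ n * r * ((cs.simple i * cs.simple j) ^ n)⁻¹,
        e + ∑ k ∈ Finset.range (2 * n),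
          if r = (cs.simple j * cs.simple i) ^ k * cs.simple j then 1 else 0) := by
  induction n with
  | zero => simp; rfl
  | succ n ih =>
    rw [pow_succ']
    change actFn cs i (actFn cs j (((actFn cs i * actFn cs j) ^ n) (r, e))) = _
    rw [ih]
    have hinv : (cs.simple i * cs.simple j)⁻¹ = cs.simple j * cs.simple i := by simp
    have hx : ((cs.simple i * cs.simple j) ^ n)⁻¹ = (cs.simple j * cs.simple i) ^ n := by
      rw [← inv_pow, hinv]
    have hc : cs.simple j * (cs.simple i * cs.simple j) ^ n
        = (cs.simple j * cs.simple i) ^ n * cs.simple j := by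
      have : SemiconjBy (cs.simple j) (cs.simple i * cs.simple j) (cs.simple j * cs.simple i) := by
        simp [SemiconjBy, mul_assoc]
      exact (this.pow_right n)
    have k1 : ((cs.simple i * cs.simple j) ^ n * r * ((cs.simple i * cs.simple j) ^ n)⁻¹
        = cs.simple j) ↔ r = (cs.simple j * cs.simple i) ^ (2 * n) * cs.simple j := by
      rw [mul_inv_eq_iff_eq_mul, ← eq_inv_mul_iff_mul_eq, hc, hx, ← mul_assoc, ← pow_add, two_mul]
    have k2 : (cs.simple j * ((cs.simple i * cs.simple j) ^ n * r *
        ((cs.simple i * cs.simple j) ^ n)⁻¹) * cs.simple j = cs.simple i) ↔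
        r = (cs.simple j * cs.simple i) ^ (2 * n + 1) * cs.simple j := by
      have : (cs.simple j * ((cs.simple i * cs.simple j) ^ n * r *
        ((cs.simple i * cs.simple j) ^ n)⁻¹) * cs.simple j = cs.simple i) ↔
        ((cs.simple i * cs.simple j) ^ n * r *
        ((cs.simple i * cs.simple j) ^ n)⁻¹) = cs.simple j * cs.simple i * cs.simple j := by
        constructor
        · intro h
          have := congrArg (fun x => cs.simple j * x * cs.simple j) h
          simpa [mul_assoc] using this
        · intro h; rw [h]; simp [mul_assoc]
      rw [this, mul_inv_eq_iff_eq_mul, ← eq_inv_mul_iff_mul_eq, mul_assoc, mul_assoc, ← mul_assoc,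
        ← mul_assoc, mul_assoc _ (cs.simple j) _, hc, hx]
      have : (cs.simple j * cs.simple i) ^ n * (cs.simple j * cs.simple i) *
          ((cs.simple j * cs.simple i) ^ n * cs.simple j) =
          (cs.simple j * cs.simple i) ^ (2 * n + 1) * cs.simple j := by
        rw [← pow_succ, ← mul_assoc, ← pow_add]; congr 2; ring
      rw [← this]
      try simp only [mul_assoc]
    simp only [actFn, k1, k2]
    rw [show 2 * (n + 1) = 2 * n + 1 + 1 by ring, Finset.sum_range_succ, Finset.sum_range_succ]
    ext
    · simp only [pow_succ', mul_inv_rev, cs.inv_simple, mul_assoc]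
    · simp only [add_assoc]

theorem actFn_liftable (cs : CoxeterSystem M W) : M.IsLiftable (actFn cs) := by
  classical
  intro i j
  funext ⟨r, e⟩
  rw [actFn_pow, cs.simple_mul_simple_pow]
  have : (cs.simple j * cs.simple i) ^ M i j = 1 := by
    rw [M.symmetric i j]
    exact cs.simple_mul_simple_pow j i
  rw [two_mul, Finset.sum_range_add]
  simp only [pow_add, this, one_mul]
  rw [CharTwo.add_self_eq_zero]
  simp
  rfl

/-- The action of `W` on signed elements. -/
noncomputable def act (cs : CoxeterSystem M W) : W →* Function.End (W × ZMod 2) :=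
  cs.lift ⟨actFn cs, actFn_liftable cs⟩

open Classical in
theorem act_word (cs : CoxeterSystem M W) (ω : List B) (r : W) (e : ZMod 2) :
    act cs (cs.wordProd ω) (r, e) =
      (cs.wordProd ω * r * (cs.wordProd ω)⁻¹, e + ((cs.rightInvSeq ω).count r : ZMod 2)) := by
  induction ω with
  | nil => simp; rfl
  | cons i ω ih =>
    rw [cs.wordProd_cons, map_mul]
    change act cs (cs.simple i) (act cs (cs.wordProd ω) (r, e)) = _
    rw [ih]
    have : act cs (cs.simple i) = actFn cs i := cs.lift_apply_simple (actFn_liftable cs) i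
    rw [this]
    have k1 : (cs.wordProd ω * r * (cs.wordProd ω)⁻¹ = cs.simple i) ↔
        (cs.wordProd ω)⁻¹ * cs.simple i * cs.wordProd ω = r := by
      constructor
      · intro h; rw [← h]; group
      · intro h; rw [← h]; group
    simp only [actFn, k1, rightInvSeq, List.count_cons, beq_iff_eq]
    ext
    · simp [mul_assoc]
    · push_cast; simp only [add_assoc]

/-- The parity cocycle. -/
noncomputable def eta (cs : CoxeterSystem M W) (w r : W) : ZMod 2 := (act cs w (r, 0)).2

open Classical in
theorem eta_word (cs : CoxeterSystem M W) (ω : List B) (r : W) :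
    eta cs (cs.wordProd ω) r = ((cs.rightInvSeq ω).count r : ZMod 2) := by
  rw [eta, act_word]; simp

theorem act_eq (cs : CoxeterSystem M W) (w r : W) (e : ZMod 2) :
    act cs w (r, e) = (w * r * w⁻¹, e + eta cs w r) := by
  obtain ⟨ω, rfl⟩ := cs.wordProd_surjective w
  rw [act_word, eta_word]

theorem eta_mul (cs : CoxeterSystem M W) (a b r : W) :
    eta cs (a * b) r = eta cs b r + eta cs a (b * r * b⁻¹) := by
  have : act cs (a * b) (r, 0) = act cs a (act cs b (r, 0)) := by rw [map_mul]; rfl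
  rw [eta, this, act_eq, act_eq]
  simp

theorem eta_one (cs : CoxeterSystem M W) (r : W) : eta cs 1 r = 0 := by
  rw [eta, map_one]; rfl

theorem mem_of_eta (cs : CoxeterSystem M W) (ω : List B) (r : W)
    (h : eta cs (cs.wordProd ω) r ≠ 0) : r ∈ cs.rightInvSeq ω := by
  classical
  rw [eta_word] at h
  by_contra hn
  exact h (by rw [List.count_eq_zero_of_not_mem hn]; simp)

theorem eta_of_nodup (cs : CoxeterSystem M W) (ω : List B) (hn : (cs.rightInvSeq ω).Nodup) (r : W)
    (h : r ∈ cs.rightInvSeq ω) : eta cs (cs.wordProd ω) r = 1 := by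
  classical
  rw [eta_word, List.count_eq_one_of_mem hn h]; simp

/-! ### Words in parabolic subgroups -/

theorem wordProd_mem (cs : CoxeterSystem M W) (J : Set B) (ω : List B) (h : ∀ b ∈ ω, b ∈ J) :
    cs.wordProd ω ∈ stdParabolic cs J := by
  apply Subgroup.list_prod_mem
  intro x hx
  obtain ⟨b, hb, rfl⟩ := List.mem_map.mp hx
  exact Subgroup.subset_closure ⟨b, h b hb, rfl⟩

theorem ris_mem (cs : CoxeterSystem M W) (J : Set B) (ω : List B) (h : ∀ b ∈ ω, b ∈ J) :
    ∀ r ∈ cs.rightInvSeq ω, r ∈ stdParabolic cs J := by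
  induction ω with
  | nil => simp
  | cons i ω ih =>
    intro r hr
    have hω : ∀ b ∈ ω, b ∈ J := fun b hb => h b (List.mem_cons_of_mem _ hb)
    rw [rightInvSeq, List.mem_cons] at hr
    rcases hr with rfl | hr
    · have := wordProd_mem cs J ω hω
      refine mul_mem (mul_mem (inv_mem this) ?_) this
      exact Subgroup.subset_closure ⟨i, h i (by simp), rfl⟩
    · exact ih hω r hr

theorem exists_word (cs : CoxeterSystem M W) (J : Set B) (u : W) (hu : u ∈ stdParabolic cs J) :
    ∃ ω : List B, (∀ b ∈ ω, b ∈ J) ∧ cs.wordProd ω = u := by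
  induction hu using Subgroup.closure_induction with
  | mem x hx =>
    obtain ⟨j, hj, rfl⟩ := hx
    exact ⟨[j], by simpa using hj, by simp⟩
  | one => exact ⟨[], by simp, by simp⟩
  | mul x y _ _ hx hy =>
    obtain ⟨a, ha, rfl⟩ := hx
    obtain ⟨b, hb, rfl⟩ := hy
    refine ⟨a ++ b, ?_, cs.wordProd_append a b⟩
    intro c hc
    rcases List.mem_append.mp hc with h | h
    · exact ha c h
    · exact hb c h
  | inv x _ hx =>
    obtain ⟨a, ha, rfl⟩ := hx
    exact ⟨a.reverse, by simpa using ha, cs.wordProd_reverse a⟩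

open List in
theorem exists_shorter (cs : CoxeterSystem M W) (ω : List B)
    (hn : ¬ (cs.rightInvSeq ω).Nodup) :
    ∃ ω' : List B, (∀ b ∈ ω', b ∈ ω) ∧ cs.wordProd ω' = cs.wordProd ω ∧ ω'.length < ω.length := by
  by_contra hcon
  apply hn
  apply List.nodup_iff_getElem?_ne_getElem?.mpr
  intro j j' j_lt_j' j'_lt_length (dup : (rightInvSeq cs ω)[j]? = (rightInvSeq cs ω)[j']?)
  show False
  replace j'_lt_length : j' < List.length ω := by simpa using j'_lt_length
  rw [getElem?_eq_getElem (by simp; lia), getElem?_eq_getElem (by simp; lia)] at dup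
  apply Option.some_injective at dup
  rw [← getD_eq_getElem _ 1, ← getD_eq_getElem _ 1] at dup
  set! t := (cs.rightInvSeq ω).getD j 1 with h₁
  set! t' := (cs.rightInvSeq (ω.eraseIdx j)).getD (j' - 1) 1 with h₂
  have h₃ : t' = (cs.rightInvSeq ω).getD j' 1 := by
    clear hcon hn
    grind only [cs.getD_rightInvSeq, = eraseIdx_eq_take_drop_succ, = getElem?_eraseIdx,
      = drop_append, drop_of_length_le, drop_drop, = length_append, = length_take, = length_drop,
      = min_def]
  have h₄ : t * t' = 1 := by
    rw [h₁, h₃, dup]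
    exact cs.getD_rightInvSeq_mul_self _ _
  have h₅ := calc
    cs.wordProd ω = cs.wordProd ω * t * t' := by rw [mul_assoc, h₄]; group
    _ = (cs.wordProd (ω.eraseIdx j)) * t' :=
        congrArg (· * t') (cs.wordProd_mul_getD_rightInvSeq _ _)
    _ = cs.wordProd ((ω.eraseIdx j).eraseIdx (j' - 1)) :=
        cs.wordProd_mul_getD_rightInvSeq _ _
  apply hcon
  refine ⟨(ω.eraseIdx j).eraseIdx (j' - 1), ?_, h₅.symm, ?_⟩
  · intro b hb
    exact List.mem_of_mem_eraseIdx (List.mem_of_mem_eraseIdx hb)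
  · grind

theorem exists_nodup_word (cs : CoxeterSystem M W) (J : Set B) (u : W)
    (hu : u ∈ stdParabolic cs J) :
    ∃ ω : List B, (∀ b ∈ ω, b ∈ J) ∧ cs.wordProd ω = u ∧ (cs.rightInvSeq ω).Nodup := by
  obtain ⟨ω, h1, h2⟩ := exists_word cs J u hu
  induction hn : ω.length using Nat.strong_induction_on generalizing ω with
  | _ n ih =>
    by_cases h : (cs.rightInvSeq ω).Nodup
    · exact ⟨ω, h1, h2, h⟩
    · obtain ⟨ω', a, b, c⟩ := exists_shorter cs ω h
      exact ih ω'.length (hn ▸ c) ω' (fun x hx => h1 x (a x hx)) (b.trans h2) rfl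

theorem exists_min (cs : CoxeterSystem M W) (I : Set B) (g₀ : W) :
    ∃ y ∈ stdParabolic cs I, ∀ x ∈ stdParabolic cs I,
      cs.length (g₀ * y) ≤ cs.length (g₀ * y * x) := by
  classical
  have hex : ∃ n, ∃ y ∈ stdParabolic cs I, cs.length (g₀ * y) = n := ⟨_, 1, one_mem _, rfl⟩
  obtain ⟨y, hy, hn⟩ := Nat.find_spec hex
  refine ⟨y, hy, fun x hx => ?_⟩
  rw [hn]
  exact Nat.find_min' hex ⟨y * x, mul_mem hy hx, by rw [mul_assoc]⟩

theorem eta_min (cs : CoxeterSystem M W) (I : Set B) (g : W)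
    (hg : ∀ x ∈ stdParabolic cs I, cs.length g ≤ cs.length (g * x)) (r : W)
    (hr : r ∈ stdParabolic cs I) : eta cs g r = 0 := by
  by_contra h
  obtain ⟨ω, hω, rfl⟩ := cs.exists_isReduced g
  have := (cs.isRightInversion_of_mem_rightInvSeq hω (mem_of_eta cs ω r h)).2
  exact absurd (hg r hr) (by omega)

theorem key_min (cs : CoxeterSystem M W) (I : Set B) (g : W)
    (hg : ∀ x ∈ stdParabolic cs I, cs.length g ≤ cs.length (g * x))
    (b : B) (ω : List B) (hb : b ∉ ω)
    (hv : g⁻¹ * cs.wordProd (b :: ω) * g ∈ stdParabolic cs I) :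
    g⁻¹ * cs.simple b * g ∈ stdParabolic cs I := by
  obtain ⟨ν, hνI, hν, hnd⟩ := exists_nodup_word cs I _ hv
  have hveq : cs.wordProd (b :: ω) = g * cs.wordProd ν * g⁻¹ := by rw [hν]; group
  have hτ : ∀ τ ∈ cs.rightInvSeq ν, g * τ * g⁻¹ ∈ cs.rightInvSeq (b :: ω) := by
    intro τ hτ
    have hτI := ris_mem cs I ν hνI τ hτ
    apply mem_of_eta
    rw [hveq, eta_mul, eta_mul]
    have e1 : g⁻¹ * (g * τ * g⁻¹) * g⁻¹⁻¹ = τ := by group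
    rw [e1]
    have hu := wordProd_mem cs I ν hνI
    have e2 : eta cs g (cs.wordProd ν * τ * (cs.wordProd ν)⁻¹) = 0 :=
      eta_min cs I g hg _ (mul_mem (mul_mem hu hτI) (inv_mem hu))
    have e3 : eta cs g⁻¹ (g * τ * g⁻¹) = 0 := by
      have := eta_mul cs g⁻¹ g τ
      rw [inv_mul_cancel, eta_one, eta_min cs I g hg τ hτI, zero_add] at this
      exact this.symm
    have e1' : g⁻¹ * (g * τ * g⁻¹) * g = τ := by group
    have e4 := eta_of_nodup cs ν hnd τ hτ
    simp only [e1', e2, e3, e4, inv_inv]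
    simp [e2]
  by_cases hall : ∀ τ ∈ cs.rightInvSeq ν, g * τ * g⁻¹ ∈ cs.rightInvSeq ω
  · exfalso
    let J : Set B := {x | x ∈ ω}
    have hωJ : ∀ x ∈ ω, x ∈ J := fun x hx => hx
    have h1 : (cs.rightInvSeq ν).prod ∈ (stdParabolic cs J).comap (MulAut.conj g).toMonoidHom := by
      apply Subgroup.list_prod_mem
      intro τ hτ
      exact ris_mem cs J ω hωJ _ (hall τ hτ)
    have h2 : g * (cs.wordProd ν)⁻¹ * g⁻¹ ∈ stdParabolic cs J := by
      rw [cs.prod_rightInvSeq] at h1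
      exact h1
    have h3 : cs.wordProd (b :: ω) ∈ stdParabolic cs J := by
      rw [hveq]
      have := inv_mem h2
      simpa [mul_assoc] using this
    rw [cs.wordProd_cons] at h3
    exact simple_not_mem cs J b hb
      ((Subgroup.mul_mem_cancel_right _ (wordProd_mem cs J ω hωJ)).mp h3)
  · push Not at hall
    obtain ⟨τ, h1, h2⟩ := hall
    have h3 := hτ τ h1
    rw [rightInvSeq, List.mem_cons] at h3
    have h4 := h3.resolve_right h2
    have hτI := ris_mem cs I ν hνI τ h1
    have hτ' : τ = g⁻¹ * ((cs.wordProd ω)⁻¹ * cs.simple b * cs.wordProd ω) * g := by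
      rw [← h4]; group
    rw [cs.wordProd_cons] at hv
    have h5 : g⁻¹ * cs.wordProd ω * g ∈ stdParabolic cs I := by
      have := mul_mem hv hτI
      have h6 : g⁻¹ * (cs.simple b * cs.wordProd ω) * g * τ = g⁻¹ * cs.wordProd ω * g := by
        rw [hτ']; simp [mul_assoc]
      rwa [h6] at this
    have := mul_mem hv (inv_mem h5)
    simpa [mul_assoc] using this

theorem key (cs : CoxeterSystem M W) (I : Set B) (g : W)
    (b : B) (ω : List B) (hb : b ∉ ω)
    (hv : g⁻¹ * cs.wordProd (b :: ω) * g ∈ stdParabolic cs I) :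
    g⁻¹ * cs.simple b * g ∈ stdParabolic cs I := by
  obtain ⟨y, hy, hmin⟩ := exists_min cs I g
  have h1 := key_min cs I (g * y) hmin b ω hb (by
    have := mul_mem (mul_mem (inv_mem hy) hv) hy
    simpa [mul_assoc] using this)
  have := mul_mem (mul_mem hy h1) (inv_mem hy)
  simpa [mul_assoc] using this

theorem all_mem (cs : CoxeterSystem M W) (I : Set B) (g : W) (l : List B) (hnd : l.Nodup)
    (hv : g⁻¹ * cs.wordProd l * g ∈ stdParabolic cs I) :
    ∀ b ∈ l, g⁻¹ * cs.simple b * g ∈ stdParabolic cs I := by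
  induction l with
  | nil => simp
  | cons b ω ih =>
    rw [List.nodup_cons] at hnd
    have h1 := key cs I g b ω hnd.1 hv
    have h2 : g⁻¹ * cs.wordProd ω * g ∈ stdParabolic cs I := by
      have := mul_mem (inv_mem h1) hv
      simpa [cs.wordProd_cons, mul_assoc] using this
    intro c hc
    rcases List.mem_cons.mp hc with rfl | hc
    · exact h1
    · exact ih hnd.2 h2 c hc

end CoxAux

/-- If `w` is the product, in some order, of the pairwise distinct elements of `J ⊆ S`, then
the parabolic closure of `w` is `W_J`: that is, `w ∈ W_J` and every parabolic subgroup
containing `w` contains `W_J`. -/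
theorem stmt_11 {B W : Type*} [Group W] {M : CoxeterMatrix B} (cs : CoxeterSystem M W)
    (l : List B) (hnd : l.Nodup) (J : Set B) (hJ : ∀ b : B, b ∈ l ↔ b ∈ J) :
    cs.wordProd l ∈ stdParabolic cs J ∧
      ∀ P : Subgroup W, IsParabolic cs P → cs.wordProd l ∈ P → stdParabolic cs J ≤ P := by
  refine ⟨CoxAux.wordProd_mem cs J l fun b hb => (hJ b).mp hb, ?_⟩
  rintro P ⟨I, g, hP⟩ hw
  have h := CoxAux.all_mem cs I g l hnd ((hP _).mp hw)
  refine (Subgroup.closure_le P).mpr ?_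
  rintro _ ⟨b, hb, rfl⟩
  exact (hP _).mpr (h b ((hJ b).mpr hb))
end

section
/- Let (W, S) be a Coxeter system, let J = {s₁, ..., sₙ} ⊆ S, and let w = s₁s₂⋯sₙ be the product of all elements of J in some order. Then every subgroup of W generated by reflections that contains w also contains J; in particular, W_J is the unique minimal reflection subgroup of W containing w. -/
/-- A reflection subgroup of a Coxeter system is a subgroup generated by reflections. -/
def IsReflectionSubgroup {B W : Type*} [Group W] {M : CoxeterMatrix B}
    (cs : CoxeterSystem M W) (G : Subgroup W) : Prop :=
  ∃ R : Set W, (∀ r ∈ R, cs.IsReflection r) ∧ G = Subgroup.closure R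

namespace ReflAux

open Polynomial.Chebyshev in
/-- The product of two reflections with the Coxeter angle has the right order. -/
theorem reflection_pow_eq_one {V : Type*} [AddCommGroup V] [Module ℝ V] {x y : V}
    {f g : Module.Dual ℝ V} (hf : f x = 2) (hg : g y = 2) (m : ℕ) (hm : 2 ≤ m)
    (hfy : f y = -2 * Real.cos (Real.pi / m)) (hgx : g x = -2 * Real.cos (Real.pi / m)) :
    (Module.reflection hf * Module.reflection hg) ^ m = 1 := by
  have hm0 : (m : ℝ) ≠ 0 := by positivity
  apply LinearEquiv.ext
  intro z
  rcases hm.eq_or_lt with rfl | hm3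
  · have hc : Real.cos (Real.pi / (2 : ℕ)) = 0 := by
      rw [Nat.cast_ofNat, Real.cos_pi_div_two]
    rw [hc, mul_zero] at hfy hgx
    simp only [pow_two, LinearEquiv.mul_apply, Module.reflection_apply, map_sub, map_smul,
      hf, hg, hfy, hgx, LinearEquiv.coe_one, id_eq]
    module
  · have ht : (2 * Real.cos (2 * Real.pi / m)) = f y * g x - 2 := by
      rw [hfy, hgx, mul_div_assoc, Real.cos_two_mul]; ring
    have hsin : Real.sin (2 * Real.pi / m) ≠ 0 := by
      apply ne_of_gt
      apply Real.sin_pos_of_pos_of_lt_pi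
      · positivity
      · have : (3 : ℝ) ≤ m := by exact_mod_cast hm3
        rw [div_lt_iff₀ (by positivity)]
        nlinarith [Real.pi_pos]
    have hS := fun n : ℤ => S_two_mul_real_cos (2 * Real.pi / m) n
    rw [Module.reflection_mul_reflection_pow_apply hf hg m z _ ht]
    rcases Nat.even_or_odd' m with ⟨k, hk | hk⟩
    · have h0 : (S ℝ ((k : ℤ) - 1)).eval (2 * Real.cos (2 * Real.pi / m)) = 0 := by
        have := hS ((k : ℤ) - 1)
        have e : (((k : ℤ) - 1 : ℤ) + 1 : ℝ) * (2 * Real.pi / m) = Real.pi := by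
          rw [hk] at hm0 ⊢
          push_cast at hm0 ⊢
          have hk0 : (k : ℝ) ≠ 0 := fun h => hm0 (by rw [h, mul_zero])
          field_simp
          ring
        rw [e, Real.sin_pi] at this
        exact (mul_eq_zero.mp this).resolve_right hsin
      rw [show ((m : ℤ) - 2) / 2 = (k : ℤ) - 1 by lia,
        show ((m : ℤ) - 1) / 2 = (k : ℤ) - 1 by lia, h0]
      simp
    · have h0 : (S ℝ (k : ℤ)).eval (2 * Real.cos (2 * Real.pi / m)) +
          (S ℝ ((k : ℤ) - 1)).eval (2 * Real.cos (2 * Real.pi / m)) = 0 := by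
        have h1 := hS ((k : ℤ) - 1)
        have h2 := hS (k : ℤ)
        have e : ((k : ℤ) + 1 : ℝ) * (2 * Real.pi / m)
            = 2 * Real.pi - (((k : ℤ) - 1 : ℤ) + 1 : ℝ) * (2 * Real.pi / m) := by
          rw [hk] at hm0 ⊢
          push_cast at hm0 ⊢
          field_simp
          ring
        rw [e, Real.sin_two_pi_sub] at h2
        have : ((S ℝ (k : ℤ)).eval (2 * Real.cos (2 * Real.pi / m)) +
          (S ℝ ((k : ℤ) - 1)).eval (2 * Real.cos (2 * Real.pi / m))) *
            Real.sin (2 * Real.pi / m) = 0 := by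
          rw [add_mul, h1, h2]; ring
        exact (mul_eq_zero.mp this).resolve_right hsin
      rw [show ((m : ℤ) - 2) / 2 = (k : ℤ) - 1 by lia,
        show ((m : ℤ) - 1) / 2 = (k : ℤ) by lia,
        show ((m : ℤ) - 3) / 2 = (k : ℤ) - 1 by lia,
        show ((m : ℤ)) / 2 = (k : ℤ) by lia, h0]
      simp

variable {B W : Type*} [Group W] {M : CoxeterMatrix B}

/-- A nonempty word without repeated letters is nontrivial. -/
theorem wordProd_ne_one (cs : CoxeterSystem M W) (i : B) (l : List B) (hi : i ∉ l) :
    cs.wordProd (i :: l) ≠ 1 := by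
  classical
  let f : B → Module.Dual ℝ (B →₀ ℝ) := fun i =>
    Finsupp.linearCombination ℝ (fun j => -2 * Real.cos (Real.pi / M i j))
  have hfs : ∀ i j, f i (Finsupp.single j 1) = -2 * Real.cos (Real.pi / M i j) := by
    intro i j
    simp [f]
  have hf : ∀ i, f i (Finsupp.single i 1) = 2 := by
    intro i
    rw [hfs]; simp
  have hl : M.IsLiftable (fun i => Module.reflection (hf i)) := by
    intro a b
    by_cases hab : a = b
    · subst hab
      rw [M.diagonal, pow_one]
      ext1 z
      exact Module.involutive_reflection (hf a) z
    · have h1 := M.off_diagonal a b hab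
      by_cases h0 : M a b = 0
      · rw [h0, pow_zero]
      · exact reflection_pow_eq_one (hf a) (hf b) _ (by lia) (hfs a b)
          (by rw [hfs, M.symmetric])
  let φ := cs.lift ⟨_, hl⟩
  have hφ : ∀ i, φ (cs.simple i) = Module.reflection (hf i) := fun i => cs.lift_apply_simple hl i
  have key : ∀ l : List B, i ∉ l → ∀ v : B →₀ ℝ, (φ (cs.wordProd l) v) i = v i := by
    intro l
    induction l with
    | nil => intro _ v; simp
    | cons j l ih =>
      intro hj v
      rw [List.mem_cons, not_or] at hj
      rw [cs.wordProd_cons, map_mul, LinearEquiv.mul_apply, hφ, Module.reflection_apply]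
      simp [ih hj.2, Ne.symm hj.1]
  intro h
  rw [cs.wordProd_cons] at h
  have h2 : cs.wordProd l = cs.simple i := by
    rw [← cs.inv_simple]; exact (inv_eq_of_mul_eq_one_right h).symm
  have h3 := key l hi (Finsupp.single i 1)
  rw [h2, hφ, Module.reflection_apply_self] at h3
  simp at h3
  norm_num at h3

/-- The parity version of the inversion cocycle. -/
theorem exists_cocycle (cs : CoxeterSystem M W) [DecidableEq W] :
    ∃ η : W → W → ZMod 2, (∀ i t, η (cs.simple i) t = if t = cs.simple i then 1 else 0) ∧
      ∀ x y t, η (x * y) t = η x t + η y (x⁻¹ * t * x) := by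
  have two : ∀ a : ZMod 2, a + a = 0 := by decide
  have hinv : ∀ i, Function.Involutive (fun p : W × ZMod 2 =>
      (cs.simple i * p.1 * cs.simple i, p.2 + if p.1 = cs.simple i then 1 else 0)) := by
    rintro i ⟨t, e⟩
    have : (cs.simple i * t * cs.simple i = cs.simple i) ↔ t = cs.simple i := by
      constructor
      · intro h
        have := congrArg (fun z => cs.simple i * z * cs.simple i) h
        simpa [mul_assoc] using this
      · rintro rfl; simp
    simp only [this, add_assoc, two]
    simp [mul_assoc]
  let p : B → Equiv.Perm (W × ZMod 2) := fun i => (hinv i).toPerm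
  have hp : ∀ i t e, p i (t, e) =
    (cs.simple i * t * cs.simple i, e + if t = cs.simple i then 1 else 0) := fun _ _ _ => rfl
  have hl : M.IsLiftable p := by
    intro i j
    set c := cs.simple i * cs.simple j with hc
    have hcj : ∀ n : ℕ, cs.simple j * c ^ n = (c ^ n)⁻¹ * cs.simple j := by
      intro n
      induction n with
      | zero => simp
      | succ n ih =>
        rw [pow_succ, ← mul_assoc, ih, mul_inv_rev]
        have : cs.simple j * c = c⁻¹ * cs.simple j := by simp [hc, mul_assoc]
        rw [mul_assoc, this, ← mul_assoc, ← mul_inv_rev, ← mul_inv_rev, ← pow_succ, ← pow_succ']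
    have main : ∀ (k : ℕ) t e, ((p i * p j) ^ k) (t, e) = (c ^ k * t * (c ^ k)⁻¹,
        e + ∑ n ∈ Finset.range (2 * k), if t = (c ^ n)⁻¹ * cs.simple j then 1 else 0) := by
      intro k
      induction k with
      | zero => intro t e; simp
      | succ k ih =>
        intro t e
        rw [pow_succ', Equiv.Perm.mul_apply, ih, Equiv.Perm.mul_apply, hp, hp]
        have e1 : (c ^ k * t * (c ^ k)⁻¹ = cs.simple j) ↔
            t = (c ^ (2 * k))⁻¹ * cs.simple j := by
          rw [two_mul, pow_add, mul_inv_rev, mul_assoc (c ^ k)⁻¹, ← hcj, ← mul_assoc]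
          constructor
          · intro h; rw [← h]; group
          · intro h; rw [h]; group
        have e2 : (cs.simple j * (c ^ k * t * (c ^ k)⁻¹) * cs.simple j = cs.simple i) ↔
            t = (c ^ (2 * k + 1))⁻¹ * cs.simple j := by
          have : (c ^ (2 * k + 1))⁻¹ * cs.simple j =
              (c ^ k)⁻¹ * (cs.simple j * cs.simple i * cs.simple j) * c ^ k := by
            have h3 : cs.simple j * cs.simple i = c⁻¹ := by simp [hc]
            rw [h3, mul_assoc, mul_assoc c⁻¹, hcj]
            group
          rw [this]
          constructor
          · intro h; rw [← h]; simp [mul_assoc]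
          · intro h; rw [h]; simp [mul_assoc]
        rw [show 2 * (k + 1) = 2 * k + 1 + 1 by ring, Finset.sum_range_succ,
          Finset.sum_range_succ]
        simp only [e1, e2]
        refine Prod.ext ?_ ?_
        · simp [hc, pow_succ', mul_assoc]
        · simp only [add_assoc]
    have hcm : c ^ M i j = 1 := cs.simple_mul_simple_pow i j
    ext1 ⟨t, e⟩
    rw [main, two_mul, Finset.sum_range_add]
    simp only [pow_add, hcm, one_mul, two]
    simp
  let φ := cs.lift ⟨p, hl⟩
  have hφ : ∀ i, φ (cs.simple i) = p i := fun i => cs.lift_apply_simple hl i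
  have hmain : ∀ w t e, φ w (t, e) = (w * t * w⁻¹, e + (φ w (t, 0)).2) := by
    intro w
    induction w using cs.simple_induction_left with
    | one => intro t e; simp
    | mul_simple_left w i ih =>
      intro t e
      rw [map_mul, Equiv.Perm.mul_apply, Equiv.Perm.mul_apply, ih, ih t 0, hφ, hp, hp]
      simp [mul_assoc, add_assoc]
  refine ⟨fun w t => (φ w⁻¹ (t, 0)).2, ?_, ?_⟩
  · intro i t
    simp only [cs.inv_simple, hφ, hp, zero_add]
  · intro x y t
    simp only [mul_inv_rev, map_mul, Equiv.Perm.mul_apply]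
    rw [hmain x⁻¹ t 0, hmain y⁻¹]
    simp

section
variable [DecidableEq W] (η : W → W → ZMod 2)

/-- Dyer's canonical generators of a subgroup. -/
def Chi (G : Subgroup W) : Set W :=
  {r | r ∈ G ∧ r * r = 1 ∧ ∀ t ∈ G, η r t = if t = r then 1 else 0}

theorem refl_mem (cs : CoxeterSystem M W)
    (h1 : ∀ i t, η (cs.simple i) t = if t = cs.simple i then 1 else 0)
    (h2 : ∀ x y t, η (x * y) t = η x t + η y (x⁻¹ * t * x)) (i : B) (l : List B) :
    ∀ G : Subgroup W, cs.wordProd l * cs.simple i * (cs.wordProd l)⁻¹ ∈ G →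
      cs.wordProd l * cs.simple i * (cs.wordProd l)⁻¹ ∈ Subgroup.closure (Chi η G) := by
  have hs : ∀ (G : Subgroup W) j, cs.simple j ∈ G → cs.simple j ∈ Chi η G :=
    fun G j hj => ⟨hj, by simp, fun t _ => h1 j t⟩
  induction l with
  | nil =>
    intro G h
    simp only [CoxeterSystem.wordProd_nil, one_mul, inv_one, mul_one] at h ⊢
    exact Subgroup.subset_closure (hs G i h)
  | cons j l ih =>
    intro G h
    set u := cs.wordProd l * cs.simple i * (cs.wordProd l)⁻¹ with hu
    have e : cs.wordProd (j :: l) * cs.simple i * (cs.wordProd (j :: l))⁻¹ =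
        cs.simple j * u * cs.simple j := by
      rw [cs.wordProd_cons, hu]; simp [mul_assoc]
    rw [e] at h ⊢
    by_cases hj : cs.simple j ∈ G
    · have hu' : u ∈ G := by
        have := G.mul_mem (G.mul_mem hj h) hj
        simpa [mul_assoc] using this
      have hj' := Subgroup.subset_closure (hs G j hj)
      exact mul_mem (mul_mem hj' (ih G hu')) hj'
    · let G' : Subgroup W := G.comap (MulAut.conj (cs.simple j)).toMonoidHom
      have hG' : ∀ x, x ∈ G' ↔ cs.simple j * x * cs.simple j ∈ G := by
        intro x
        simp [G', Subgroup.mem_comap]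
      have := ih G' ((hG' u).2 h)
      have hle : Subgroup.closure (Chi η G') ≤
          (Subgroup.closure (Chi η G)).comap (MulAut.conj (cs.simple j)).toMonoidHom := by
        rw [Subgroup.closure_le]
        rintro r ⟨hrG, hrr, hr⟩
        rw [hG'] at hrG
        simp only [Subgroup.coe_comap, Set.mem_preimage, SetLike.mem_coe]
        apply Subgroup.subset_closure
        have e3 : (MulAut.conj (cs.simple j)).toMonoidHom r =
          cs.simple j * r * cs.simple j := by simp
        rw [e3]
        refine ⟨hrG, ?_, ?_⟩
        · have : cs.simple j * r * cs.simple j * (cs.simple j * r * cs.simple j) =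
            cs.simple j * (r * r) * cs.simple j := by simp [mul_assoc]
          rw [this, hrr]; simp
        · intro t ht
          rw [mul_assoc, h2, h2, h1, h1, cs.inv_simple]
          have n1 : t ≠ cs.simple j := fun h => hj (h ▸ ht)
          have n2 : r⁻¹ * (cs.simple j * t * cs.simple j) * r ≠ cs.simple j := by
            intro h
            apply hj
            have h5 : cs.simple j = (cs.simple j * r * cs.simple j)⁻¹ * t *
                (cs.simple j * r * cs.simple j) := by
              have := congrArg (fun z => cs.simple j * z * cs.simple j) h
              simp only [cs.simple_mul_simple_self, one_mul] at this
              refine this.symm.trans ?_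
              simp [mul_assoc]
            rw [h5]
            exact mul_mem (mul_mem (inv_mem hrG) ht) hrG
          have m1 : cs.simple j * t * cs.simple j ∈ G' := by
            rw [hG']; simpa [mul_assoc] using ht
          rw [hr _ m1, if_neg n1, if_neg n2, zero_add, add_zero]
          congr 1
          apply propext
          constructor
          · intro h; rw [← h]; simp [mul_assoc]
          · intro h; rw [h]; simp [mul_assoc]
      have := hle this
      simpa [Subgroup.mem_comap] using this

theorem list_exchange (h2 : ∀ x y t, η (x * y) t = η x t + η y (x⁻¹ * t * x))
    (G : Subgroup W) (L : List W) (hL : ∀ r ∈ L, r ∈ Chi η G) :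
    ∀ t ∈ G, η L.prod t ≠ 0 → ∃ L' : List W, (∀ r ∈ L', r ∈ Chi η G) ∧
      L'.length < L.length ∧ t * L.prod = L'.prod := by
  induction L with
  | nil =>
    intro t _ h
    have := h2 1 1 t
    simp at this
    exact absurd this (by simpa using h)
  | cons r L ih =>
    intro t ht h
    have hr := hL r (by simp)
    have hL' : ∀ r ∈ L, r ∈ Chi η G := fun x hx => hL x (by simp [hx])
    by_cases htr : t = r
    · exact ⟨L, hL', by simp, by rw [htr, List.prod_cons, ← mul_assoc, hr.2.1, one_mul]⟩
    · rw [List.prod_cons, h2, hr.2.2 t ht, if_neg htr, zero_add] at h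
      obtain ⟨L', h3, h4, h5⟩ := ih hL' _ (mul_mem (mul_mem (inv_mem hr.1) ht) hr.1) h
      refine ⟨r :: L', ?_, by simpa using h4, ?_⟩
      · intro x hx
        rcases List.mem_cons.1 hx with rfl | hx
        · exact hr
        · exact h3 x hx
      · rw [List.prod_cons, List.prod_cons, ← h5]; group

theorem eq_one_of_list (h2 : ∀ x y t, η (x * y) t = η x t + η y (x⁻¹ * t * x))
    (G : Subgroup W) (n : ℕ) : ∀ (L : List W), L.length = n → (∀ r ∈ L, r ∈ Chi η G) →
    (∀ t ∈ G, η L.prod t = 0) → L.prod = 1 := by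
  induction n using Nat.strong_induction_on with
  | _ n ih =>
    intro L hn hL h0
    cases L with
    | nil => simp
    | cons r L =>
      have hr := hL r (by simp)
      have hL' : ∀ r ∈ L, r ∈ Chi η G := fun x hx => hL x (by simp [hx])
      have h := h0 r hr.1
      rw [List.prod_cons, h2, hr.2.2 r hr.1, if_pos rfl, inv_mul_cancel, one_mul] at h
      have hne : η L.prod r ≠ 0 := by
        intro h'
        rw [h'] at h
        exact absurd h (by decide)
      obtain ⟨L', h3, h4, h5⟩ := list_exchange η h2 G L hL' r hr.1 hne
      rw [List.prod_cons, h5] at h0 ⊢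
      exact ih _ (by simp at hn; lia) L' rfl h3 h0

theorem eq_one_of_mem (cs : CoxeterSystem M W)
    (h1 : ∀ i t, η (cs.simple i) t = if t = cs.simple i then 1 else 0)
    (h2 : ∀ x y t, η (x * y) t = η x t + η y (x⁻¹ * t * x))
    (G : Subgroup W) (hG : IsReflectionSubgroup cs G) (w : W) (hw : w ∈ G)
    (h0 : ∀ t ∈ G, η w t = 0) : w = 1 := by
  obtain ⟨R, hR, hGR⟩ := hG
  have hle : G ≤ Subgroup.closure (Chi η G) := by
    conv_lhs => rw [hGR]
    rw [Subgroup.closure_le]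
    intro r hr
    have hrG : r ∈ G := by rw [hGR]; exact Subgroup.subset_closure hr
    obtain ⟨x, i, rfl⟩ := hR r hr
    obtain ⟨l, rfl⟩ := cs.wordProd_surjective x
    exact refl_mem η cs h1 h2 i l G hrG
  have hw' := hle hw
  rw [← Subgroup.mem_toSubmonoid, Subgroup.closure_toSubmonoid] at hw'
  obtain ⟨L, hL, rfl⟩ := Submonoid.exists_list_of_mem_closure hw'
  refine eq_one_of_list η h2 G _ L rfl ?_ h0
  intro r hr
  rcases hL r hr with h | h
  · exact h
  · have : r⁻¹ = r := by
      have h4 : r⁻¹⁻¹ = r⁻¹ := inv_eq_of_mul_eq_one_left h.2.1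
      rw [inv_inv] at h4
      exact h4.symm
    rwa [Set.mem_inv, this] at h

theorem word_exchange (cs : CoxeterSystem M W)
    (h1 : ∀ i t, η (cs.simple i) t = if t = cs.simple i then 1 else 0)
    (h2 : ∀ x y t, η (x * y) t = η x t + η y (x⁻¹ * t * x)) (l : List B) :
    ∀ t, η (cs.wordProd l) t ≠ 0 → ∃ a i b, l = a ++ i :: b ∧
      t * cs.wordProd l = cs.wordProd (a ++ b) := by
  induction l with
  | nil =>
    intro t h
    have := h2 1 1 t
    simp at this
    exact absurd this (by simpa using h)
  | cons j l ih =>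
    intro t h
    by_cases htr : t = cs.simple j
    · exact ⟨[], j, l, rfl, by simp [htr, cs.wordProd_cons]⟩
    · rw [cs.wordProd_cons, h2, h1, if_neg htr, zero_add] at h
      obtain ⟨a, i, b, h3, h4⟩ := ih _ h
      refine ⟨j :: a, i, b, by simp [h3], ?_⟩
      rw [List.cons_append, cs.wordProd_cons, cs.wordProd_cons, ← h4]; group

end

end ReflAux

/-- If `w` is the product, in some order, of the pairwise distinct elements of `J ⊆ S`, then
every reflection subgroup containing `w` contains all the simple reflections indexed by `J`;
in particular `W_J` is the unique minimal reflection subgroup containing `w`. -/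
theorem stmt_12 {B W : Type*} [Group W] {M : CoxeterMatrix B} (cs : CoxeterSystem M W)
    (l : List B) (hnd : l.Nodup) (G : Subgroup W)
    (hG : IsReflectionSubgroup cs G) (hw : cs.wordProd l ∈ G) :
    ∀ i ∈ l, cs.simple i ∈ G := by
  classical
  obtain ⟨η, h1, h2⟩ := ReflAux.exists_cocycle cs
  have hword : ∀ l : List B, (∀ i ∈ l, cs.simple i ∈ G) → cs.wordProd l ∈ G := by
    intro l hl
    refine Subgroup.list_prod_mem G ?_
    intro x hx
    obtain ⟨i, hi, rfl⟩ := List.mem_map.1 hx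
    exact hl i hi
  induction hn : l.length using Nat.strong_induction_on generalizing l with
  | _ n ih =>
    by_cases hl : l = []
    · simp [hl]
    · have hne : cs.wordProd l ≠ 1 := by
        cases l with
        | nil => exact absurd rfl hl
        | cons i l => exact ReflAux.wordProd_ne_one cs i l (List.nodup_cons.1 hnd).1
      have : ∃ t ∈ G, η (cs.wordProd l) t ≠ 0 := by
        by_contra! hcon
        exact hne (ReflAux.eq_one_of_mem η cs h1 h2 G hG _ hw hcon)
      obtain ⟨t, ht, htn⟩ := this
      obtain ⟨a, i, b, rfl, h4⟩ := ReflAux.word_exchange η cs h1 h2 l t htn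
      have hab := ih (a ++ b).length (by simp at hn ⊢; lia) (a ++ b)
        (hnd.sublist (by simp)) (h4 ▸ mul_mem ht hw) rfl
      have ha := hword a (fun x hx => hab x (by simp [hx]))
      have hb := hword b (fun x hx => hab x (by simp [hx]))
      have hi : cs.simple i ∈ G := by
        rw [cs.wordProd_append, cs.wordProd_cons] at hw
        have := mul_mem (mul_mem (inv_mem ha) hw) (inv_mem hb)
        simpa [mul_assoc] using this
      intro x hx
      rcases List.mem_append.1 hx with hx | hx
      · exact hab x (by simp [hx])
      · rcases List.mem_cons.1 hx with rfl | hx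
        · exact hi
        · exact hab x (by simp [hx])
end

section
/- Let (W, S) be a Coxeter system with w = s₁s₂⋯sₙ a reduced word, and set rᵢ = s₁s₂⋯s_{i-1} sᵢ s_{i-1}⋯s₁ for i = 1, ..., n. Then for any reflection subgroup G ≤ W containing w, the element w lies in the subgroup generated by G ∩ {r₁, ..., rₙ}. -/
/-- The reflection cocycle. -/
theorem exists_reflection_cocycle {B W : Type*} [Group W] {M : CoxeterMatrix B}
    (cs : CoxeterSystem M W) :
    ∃ N : W → W → ZMod 2, (∀ u v t, N (u * v) t = N u t + N v (u⁻¹ * t * u)) ∧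
      (∀ i, N (cs.simple i) (cs.simple i) = 1) ∧
      (∀ i t, t ≠ cs.simple i → N (cs.simple i) t = 0) := by
  classical
  let χ : W → W → ZMod 2 := fun a t => if t = a then 1 else 0
  let f : B → Equiv.Perm (W × ZMod 2) := fun i =>
    { toFun := fun x => (cs.simple i * x.1 * cs.simple i, x.2 + χ (cs.simple i) x.1)
      invFun := fun x => (cs.simple i * x.1 * cs.simple i, x.2 + χ (cs.simple i) x.1)
      left_inv := by
        rintro ⟨t, e⟩
        have h : cs.simple i * t * cs.simple i = cs.simple i ↔ t = cs.simple i := by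
          constructor
          · intro h
            have := congrArg (fun z => cs.simple i * z * cs.simple i) h
            simpa [mul_assoc] using this
          · rintro rfl; simp
        have h2 : ∀ a : ZMod 2, a + a = 0 := by decide
        refine Prod.ext ?_ ?_
        · simp [mul_assoc]
        · simp only [χ, h, add_assoc, h2, add_zero]
      right_inv := by
        rintro ⟨t, e⟩
        have h : cs.simple i * t * cs.simple i = cs.simple i ↔ t = cs.simple i := by
          constructor
          · intro h
            have := congrArg (fun z => cs.simple i * z * cs.simple i) h
            simpa [mul_assoc] using this
          · rintro rfl; simp
        have h2 : ∀ a : ZMod 2, a + a = 0 := by decide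
        refine Prod.ext ?_ ?_
        · simp [mul_assoc]
        · simp only [χ, h, add_assoc, h2, add_zero] }
  have hf : ∀ i t e, f i (t, e) = (cs.simple i * t * cs.simple i, e + χ (cs.simple i) t) :=
    fun i t e => rfl
  have hlift : M.IsLiftable f := by
    intro i j
    have key : ∀ m : ℕ, ∀ t e, ((f i * f j) ^ m) (t, e) =
        ((cs.simple i * cs.simple j) ^ m * t * ((cs.simple i * cs.simple j) ^ m)⁻¹,
          e + ∑ k ∈ Finset.range (2 * m), χ ((cs.simple j * cs.simple i) ^ k * cs.simple j) t) := by
      intro m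
      induction m with
      | zero => intro t e; simp
      | succ m ih =>
        intro t e
        have hinv : ((cs.simple i * cs.simple j) ^ m)⁻¹ = (cs.simple j * cs.simple i) ^ m := by
          rw [← inv_pow]; simp
        have hsj : ∀ m : ℕ, cs.simple j * (cs.simple i * cs.simple j) ^ m
            = (cs.simple j * cs.simple i) ^ m * cs.simple j := by
          intro m
          induction m with
          | zero => simp
          | succ m ih => rw [pow_succ, ← mul_assoc, ih, pow_succ]; simp only [mul_assoc]
        have h1 : ∀ a : W, (cs.simple i * cs.simple j) ^ m * t * (cs.simple j * cs.simple i) ^ m = a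
            ↔ t = (cs.simple j * cs.simple i) ^ m * a * (cs.simple i * cs.simple j) ^ m := by
          intro a
          rw [← hinv]
          constructor
          · rintro rfl; group
          · rintro rfl; group
        have h2 : ∀ a b : W, cs.simple j * a * cs.simple j = b ↔
            a = cs.simple j * b * cs.simple j := by
          intro a b
          constructor <;> (rintro rfl; simp [mul_assoc])
        rw [pow_succ', Equiv.Perm.mul_apply, ih, Equiv.Perm.mul_apply, hf, hf, hinv]
        refine Prod.ext ?_ ?_
        · simp only [pow_succ', mul_inv_rev, hinv]
          simp [mul_assoc]
        · rw [show 2 * (m + 1) = 2 * m + 1 + 1 by ring, Finset.sum_range_succ,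
            Finset.sum_range_succ]
          have e1 : (cs.simple j * cs.simple i) ^ m * cs.simple j *
              (cs.simple i * cs.simple j) ^ m =
              (cs.simple j * cs.simple i) ^ (2 * m) * cs.simple j := by
            rw [mul_assoc, hsj, ← mul_assoc, ← pow_add, two_mul]
          have e2 : (cs.simple j * cs.simple i) ^ m * (cs.simple j * cs.simple i * cs.simple j) *
              (cs.simple i * cs.simple j) ^ m =
              (cs.simple j * cs.simple i) ^ (2 * m + 1) * cs.simple j := by
            rw [mul_assoc, mul_assoc _ (cs.simple j), hsj, ← mul_assoc, ← mul_assoc, ← pow_succ,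
              ← pow_add]
            congr 2; ring
          simp only [χ, h2, h1, e1, e2, add_assoc]
    ext1 ⟨t, e⟩
    rw [key, cs.simple_mul_simple_pow, two_mul, Finset.sum_range_add]
    have h2 : ∀ a : ZMod 2, a + a = 0 := by decide
    simp only [pow_add, cs.simple_mul_simple_pow', one_mul, h2]
    simp
  let φ := cs.lift ⟨f, hlift⟩
  have hφs : ∀ i, φ (cs.simple i) = f i := fun i => cs.lift_apply_simple hlift i
  have hφ : ∀ w t e, φ w (t, e) = (w * t * w⁻¹, e + (φ w (t, 0)).2) := by
    intro w
    induction w using cs.simple_induction_left with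
    | one => intro t e; simp
    | mul_simple_left w i ih =>
      intro t e
      rw [map_mul, Equiv.Perm.mul_apply, Equiv.Perm.mul_apply, ih t e, ih t 0, hφs, hf, hf]
      simp [mul_assoc, add_assoc]
  refine ⟨fun w t => (φ w⁻¹ (t, 0)).2, ?_, ?_, ?_⟩
  · intro u v t
    show (φ (u * v)⁻¹ (t, 0)).2 = (φ u⁻¹ (t, 0)).2 + (φ v⁻¹ (u⁻¹ * t * u, 0)).2
    rw [mul_inv_rev, map_mul, Equiv.Perm.mul_apply, hφ u⁻¹ t 0, hφ v⁻¹]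
    simp
  · intro i
    simp [hφs, hf, χ]
  · intro i t h
    simp [hφs, hf, χ, h]

/-- Folding a gallery: remove the crossings of walls belonging to `G`. -/
theorem fold_gallery {B W : Type*} [Group W] {M : CoxeterMatrix B}
    (cs : CoxeterSystem M W) (N : W → W → ZMod 2)
    (hmul : ∀ u v t, N (u * v) t = N u t + N v (u⁻¹ * t * u))
    (h0 : ∀ i t, t ≠ cs.simple i → N (cs.simple i) t = 0) (G : Subgroup W) (l : List B) :
    ∃ g ∈ Subgroup.closure {t : W | t ∈ cs.leftInvSeq l ∧ t ∈ G},
      ∀ t ∈ G, N (g⁻¹ * cs.wordProd l) t = 0 := by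
  have hN1 : ∀ t, N 1 t = 0 := by
    intro t
    have := hmul 1 1 t
    simpa using this
  induction l using List.reverseRecOn with
  | nil => exact ⟨1, one_mem _, by simpa using fun t _ => hN1 t⟩
  | append_singleton l i ih =>
    obtain ⟨g, hg, hz⟩ := ih
    have hmono : Subgroup.closure {t : W | t ∈ cs.leftInvSeq l ∧ t ∈ G} ≤
        Subgroup.closure {t : W | t ∈ cs.leftInvSeq (l ++ [i]) ∧ t ∈ G} := by
      apply Subgroup.closure_mono
      rintro t ⟨h1, h2⟩
      refine ⟨?_, h2⟩
      rw [← List.concat_eq_append, cs.leftInvSeq_concat]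
      simp [h1]
    have hgG : g ∈ G := (Subgroup.closure_le G).2 (fun t ht => ht.2) hg
    have hw : cs.wordProd (l ++ [i]) = cs.wordProd l * cs.simple i := by
      simp [cs.wordProd_append]
    set w := cs.wordProd l with hwdef
    by_cases hr : w * cs.simple i * w⁻¹ ∈ G
    · refine ⟨w * cs.simple i * w⁻¹ * g, mul_mem (Subgroup.subset_closure ⟨?_, hr⟩) (hmono hg), ?_⟩
      · rw [← List.concat_eq_append, cs.leftInvSeq_concat]
        simp [hwdef]
      · intro t ht
        rw [hw, ← hz t ht]
        congr 1
        simp [mul_assoc]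
    · refine ⟨g, hmono hg, ?_⟩
      intro t ht
      rw [hw, ← mul_assoc, hmul, hz t ht, zero_add]
      apply h0
      intro h
      apply hr
      have : w * cs.simple i * w⁻¹ = g * t * g⁻¹ := by
        rw [← h]; group
      rw [this]
      exact mul_mem (mul_mem hgG ht) (inv_mem hgG)

/-- Products of canonical generators without inversions in `G` are trivial. -/
theorem prod_eq_one_of_no_inversions {W : Type*} [Group W] (N : W → W → ZMod 2)
    (hmul : ∀ u v t, N (u * v) t = N u t + N v (u⁻¹ * t * u)) (G : Subgroup W) :
    ∀ n : ℕ, ∀ L : List W, L.length = n →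
      (∀ x ∈ L, x ∈ G ∧ x * x = 1 ∧ N x x = 1 ∧ ∀ t ∈ G, t ≠ x → N x t = 0) →
      (∀ t ∈ G, N L.prod t = 0) → L.prod = 1 := by
  have hN1 : ∀ t, N 1 t = 0 := by
    intro t
    have := hmul 1 1 t
    simpa using this
  have hex : ∀ L : List W,
      (∀ x ∈ L, x ∈ G ∧ x * x = 1 ∧ N x x = 1 ∧ ∀ t ∈ G, t ≠ x → N x t = 0) →
      ∀ t ∈ G, N L.prod t ≠ 0 → ∃ a x b, L = a ++ x :: b ∧ t = a.prod * x * a.prod⁻¹ := by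
    intro L
    induction L with
    | nil => intro _ t _ h; exact absurd (hN1 t) (by simpa using h)
    | cons y L ih =>
      intro hL t ht h
      by_cases hty : t = y
      · exact ⟨[], y, L, rfl, by simp [hty]⟩
      have hy := hL y (by simp)
      rw [List.prod_cons, hmul, hy.2.2.2 t ht hty, zero_add] at h
      obtain ⟨a, x, b, rfl, h2⟩ := ih (fun x hx => hL x (by simp [hx])) _
        (mul_mem (mul_mem (inv_mem hy.1) ht) hy.1) h
      refine ⟨y :: a, x, b, rfl, ?_⟩
      have : t = y * (y⁻¹ * t * y) * y⁻¹ := by group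
      rw [this, h2, List.prod_cons]; group
  intro n
  induction n using Nat.strong_induction_on with
  | _ n IH =>
    intro L hn hL hz
    cases L with
    | nil => simp
    | cons y L =>
      have hy := hL y (by simp)
      have h := hz y hy.1
      rw [List.prod_cons, hmul, hy.2.2.1] at h
      have hne : N L.prod (y⁻¹ * y * y) ≠ 0 := by
        intro h'
        rw [h'] at h
        exact absurd h (by decide)
      obtain ⟨a, x, b, rfl, h2⟩ := hex L (fun x hx => hL x (by simp [hx])) _
        (by simpa using hy.1) hne
      have hx := hL x (by simp)
      have hprod : (y :: (a ++ x :: b)).prod = (a ++ b).prod := by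
        have h3 : y = a.prod * x * a.prod⁻¹ := by simpa using h2
        rw [List.prod_cons, List.prod_append, List.prod_append, List.prod_cons, h3]
        have : a.prod * x * a.prod⁻¹ * (a.prod * (x * b.prod)) = a.prod * (x * x) * b.prod := by
          group
        rw [this, hx.2.1, mul_one]
      rw [hprod]
      refine IH (a ++ b).length ?_ (a ++ b) rfl ?_ ?_
      · rw [← hn]; simp
      · intro z hzz
        apply hL
        simp only [List.mem_append, List.mem_cons] at hzz ⊢
        tauto
      · rw [← hprod]; exact hz

/-- If `w = s₁ ⋯ sₙ` is reduced and `rᵢ = s₁ ⋯ s_{i-1} sᵢ s_{i-1} ⋯ s₁` (the left inversion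
sequence), then for any reflection subgroup `G` containing `w`, the element `w` lies in the
subgroup generated by `G ∩ {r₁, …, rₙ}`. -/
theorem stmt_13 {B W : Type*} [Group W] {M : CoxeterMatrix B} (cs : CoxeterSystem M W)
    (l : List B) (hred : cs.IsReduced l) (G : Subgroup W)
    (hG : IsReflectionSubgroup cs G) (hw : cs.wordProd l ∈ G) :
    cs.wordProd l ∈ Subgroup.closure {t : W | t ∈ cs.leftInvSeq l ∧ t ∈ G} := by
  obtain ⟨N, hmul, h1, h0⟩ := exists_reflection_cocycle cs
  have hN1 : ∀ t, N 1 t = 0 := by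
    intro t
    have := hmul 1 1 t
    simpa using this
  let X : Set W := {x | x ∈ G ∧ x * x = 1 ∧ N x x = 1 ∧ ∀ t ∈ G, t ≠ x → N x t = 0}
  have hstep : ∀ (p : List B) (i : B), (∀ t ∈ cs.leftInvSeq p, t ∈ G → t ∈ Subgroup.closure X) →
      cs.wordProd p * cs.simple i * (cs.wordProd p)⁻¹ ∈ G →
      cs.wordProd p * cs.simple i * (cs.wordProd p)⁻¹ ∈ Subgroup.closure X := by
    intro p i hp ht
    obtain ⟨g, hg, hz⟩ := fold_gallery cs N hmul h0 G p
    have hgG : g ∈ G := (Subgroup.closure_le G).2 (fun t ht => ht.2) hg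
    have hgX : g ∈ Subgroup.closure X :=
      (Subgroup.closure_le _).2 (fun t ht => hp t ht.1 ht.2) hg
    obtain ⟨q, hq⟩ : ∃ q, q = g⁻¹ * cs.wordProd p := ⟨_, rfl⟩
    rw [← hq] at hz
    have hpq : cs.wordProd p = g * q := by rw [hq]; group
    have e : cs.wordProd p * cs.simple i * (cs.wordProd p)⁻¹ =
        g * (q * cs.simple i * q⁻¹) * g⁻¹ := by rw [hpq]; group
    have hr : q * cs.simple i * q⁻¹ ∈ G := by
      have : q * cs.simple i * q⁻¹ =
        g⁻¹ * (cs.wordProd p * cs.simple i * (cs.wordProd p)⁻¹) * g := by rw [e]; group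
      rw [this]
      exact mul_mem (mul_mem (inv_mem hgG) ht) hgG
    have hinv : ∀ v, q * v * q⁻¹ ∈ G → N q⁻¹ v = 0 := by
      intro v hv
      have h := hmul q q⁻¹ (q * v * q⁻¹)
      rw [mul_inv_cancel, hN1, hz _ hv, zero_add] at h
      rw [h]; congr 1; group
    have hNr : ∀ u ∈ G, N (q * cs.simple i * q⁻¹) u = N (cs.simple i) (q⁻¹ * u * q) := by
      intro u hu
      rw [hmul, hmul, hz u hu, zero_add, hinv, add_zero]
      have : q * ((q * cs.simple i)⁻¹ * u * (q * cs.simple i)) * q⁻¹ =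
        (q * cs.simple i * q⁻¹)⁻¹ * u * (q * cs.simple i * q⁻¹) := by group
      rw [this]
      exact mul_mem (mul_mem (inv_mem hr) hu) hr
    have hX : q * cs.simple i * q⁻¹ ∈ X := by
      refine ⟨hr, by simp [mul_assoc], ?_, ?_⟩
      · rw [hNr _ hr, ← h1 i]; congr 1; group
      · intro t ht hne
        rw [hNr _ ht]
        apply h0
        intro h
        apply hne
        rw [← h]; group
    rw [e]
    exact mul_mem (mul_mem hgX (Subgroup.subset_closure hX)) (inv_mem hgX)
  have hall : ∀ (p : List B), ∀ t ∈ cs.leftInvSeq p, t ∈ G → t ∈ Subgroup.closure X := by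
    intro p
    induction p using List.reverseRecOn with
    | nil => simp
    | append_singleton p i ih =>
      intro t ht htG
      rw [← List.concat_eq_append, cs.leftInvSeq_concat] at ht
      simp only [List.concat_eq_append, List.mem_append, List.mem_singleton] at ht
      rcases ht with ht | rfl
      · exact ih t ht htG
      · exact hstep p i ih htG
  have hGX : G ≤ Subgroup.closure X := by
    obtain ⟨R, hR, hGR⟩ := hG
    rw [hGR, Subgroup.closure_le]
    intro r hr
    have hrG : r ∈ G := by rw [hGR]; exact Subgroup.subset_closure hr
    obtain ⟨w, i, rfl⟩ := hR r hr
    obtain ⟨p, -, rfl⟩ := cs.exists_isReduced w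
    exact hstep p i (hall p) hrG
  obtain ⟨g, hg, hz⟩ := fold_gallery cs N hmul h0 G l
  have hgG : g ∈ G := (Subgroup.closure_le G).2 (fun t ht => ht.2) hg
  have hmem := hGX (mul_mem (inv_mem hgG) hw)
  rw [← Subgroup.mem_toSubmonoid, Subgroup.closure_toSubmonoid] at hmem
  obtain ⟨L, hL, hprod⟩ := Submonoid.exists_list_of_mem_closure hmem
  have hone := prod_eq_one_of_no_inversions N hmul G L.length L rfl (by
    intro x hx
    rcases hL x hx with h | h
    · exact h
    · have h' : x⁻¹ ∈ X := h
      have : x = x⁻¹ := by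
        have := h'.2.1
        rw [← mul_eq_one_iff_eq_inv]
        rw [← mul_inv_rev, inv_eq_one] at this
        exact this
      rw [this]; exact h') (by rw [hprod]; exact hz)
  rw [hprod, inv_mul_eq_one] at hone
  rw [← hone]
  exact hg
end

section
/- Let W be an infinite irreducible Coxeter group of finite rank and let x ∈ W be essential (i.e., its parabolic closure is all of W). Then for every positive integer m, the power x^m is also essential in W. -/
/-- A Coxeter matrix is irreducible if the index set does not split into two nonempty
pairwise-commuting parts. -/
def CoxIrreducible {B : Type*} (M : CoxeterMatrix B) : Prop :=
  ∀ I : Set B, (∀ i ∈ I, ∀ j ∉ I, M i j = 2) → I = ∅ ∨ I = Set.univ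

/-- An element is essential if no proper parabolic subgroup contains it. -/
def Essential {B W : Type*} [Group W] {M : CoxeterMatrix B}
    (cs : CoxeterSystem M W) (x : W) : Prop :=
  ∀ P : Subgroup W, IsParabolic cs P → x ∈ P → P = ⊤

namespace CoxGeom

open CoxeterSystem

/-- Twice the cosine attached to an edge label (label `0` means infinity). -/
noncomputable def cc (n : ℕ) : ℝ := if n = 0 then 2 else 2 * Real.cos (Real.pi / n)

/-- The sequence `sin (k π / n) / sin (π / n)`. -/
noncomputable def UU (n k : ℕ) : ℝ :=
  if n = 0 then k else Real.sin (k * (Real.pi / n)) / Real.sin (Real.pi / n)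

lemma sin_pos_of_two_le {n : ℕ} (h : 2 ≤ n) : 0 < Real.sin (Real.pi / n) := by
  have h2 : (2 : ℝ) ≤ n := by exact_mod_cast h
  apply Real.sin_pos_of_pos_of_lt_pi
  · have := Real.pi_pos
    positivity
  · rw [div_lt_iff₀ (by linarith)]
    nlinarith [Real.pi_pos]

lemma UU_zero (n : ℕ) : UU n 0 = 0 := by simp [UU]

lemma UU_one {n : ℕ} (h : n ≠ 1) : UU n 1 = 1 := by
  unfold UU
  split_ifs with h0
  · simp
  · have := sin_pos_of_two_le (n := n) (by omega)
    rw [Nat.cast_one, one_mul, div_self this.ne']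

lemma UU_rec (n k : ℕ) : UU n (k + 2) = cc n * UU n (k + 1) - UU n k := by
  unfold UU cc
  split_ifs with h0
  · push_cast; ring
  · set t := Real.pi / n
    have h1 : ((k + 2 : ℕ) : ℝ) * t = ((k + 1 : ℕ) : ℝ) * t + t := by push_cast; ring
    have h2 : (k : ℝ) * t = ((k + 1 : ℕ) : ℝ) * t - t := by push_cast; ring
    rw [h1, h2, Real.sin_add, Real.sin_sub]
    ring

lemma UU_nonneg {n k : ℕ} (h1 : n ≠ 1) (h : n = 0 ∨ k ≤ n) : 0 ≤ UU n k := by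
  unfold UU
  split_ifs with h0
  · positivity
  · have h2 := sin_pos_of_two_le (n := n) (by omega)
    apply div_nonneg _ h2.le
    have hk : (k : ℝ) ≤ n := by exact_mod_cast (by omega : k ≤ n)
    have hn : (0 : ℝ) < n := by exact_mod_cast (by omega : 0 < n)
    have := Real.pi_pos
    apply Real.sin_nonneg_of_nonneg_of_le_pi (by positivity)
    rw [← mul_div_assoc, div_le_iff₀ hn]
    nlinarith

lemma UU_two_mul {n : ℕ} (h : n ≠ 0) : UU n (2 * n) = 0 := by
  unfold UU
  rw [if_neg h]
  have : ((2 * n : ℕ) : ℝ) * (Real.pi / n) = 2 * Real.pi := by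
    have : (n : ℝ) ≠ 0 := by exact_mod_cast h
    push_cast; field_simp
  rw [this]; simp

lemma UU_two_mul_add_one {n : ℕ} (h : n ≠ 0) (h1 : n ≠ 1) : UU n (2 * n + 1) = 1 := by
  unfold UU
  rw [if_neg h]
  have h2 := sin_pos_of_two_le (n := n) (by omega)
  have : ((2 * n + 1 : ℕ) : ℝ) * (Real.pi / n) = Real.pi / n + 2 * Real.pi := by
    have : (n : ℝ) ≠ 0 := by exact_mod_cast h
    push_cast; field_simp; ring
  rw [this, Real.sin_add_two_pi, div_self h2.ne']

lemma cc_nonneg {n : ℕ} (h : n ≠ 1) : 0 ≤ cc n := by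
  unfold cc
  split_ifs with h0
  · norm_num
  · have h2 : (2 : ℝ) ≤ n := by exact_mod_cast (by omega : 2 ≤ n)
    have := Real.pi_pos
    have : 0 ≤ Real.cos (Real.pi / n) := by
      apply Real.cos_nonneg_of_neg_pi_div_two_le_of_le
      · have : 0 ≤ Real.pi / n := by positivity
        linarith
      · rw [div_le_div_iff₀ (by linarith) (by norm_num)]
        nlinarith
    linarith

lemma cc_pos {n : ℕ} (h : n ≠ 1) (h' : n ≠ 2) : 0 < cc n := by
  unfold cc
  split_ifs with h0
  · norm_num
  · have h2 : (3 : ℝ) ≤ n := by exact_mod_cast (by omega : 3 ≤ n)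
    have := Real.pi_pos
    have : 0 < Real.cos (Real.pi / n) := by
      apply Real.cos_pos_of_mem_Ioo
      constructor
      · have : 0 ≤ Real.pi / n := by positivity
        linarith
      · rw [div_lt_div_iff₀ (by linarith) (by norm_num)]
        nlinarith
    linarith

lemma cc_sq {n : ℕ} (h0 : n ≠ 0) (h : n ≠ 1) : 4 - cc n ^ 2 ≠ 0 := by
  have h2 := sin_pos_of_two_le (n := n) (by omega)
  unfold cc
  rw [if_neg h0]
  have := Real.sin_sq_add_cos_sq (Real.pi / n)
  have h3 : 4 - (2 * Real.cos (Real.pi / n)) ^ 2 = 4 * Real.sin (Real.pi / n) ^ 2 := by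
    linear_combination (-4) * this
  rw [h3]
  positivity

lemma cc_self : cc 1 = -2 := by simp [cc]

variable {B W : Type*} [Group W] [Fintype B] {M : CoxeterMatrix B} (cs : CoxeterSystem M W)

/-- Gram matrix (times two). -/
noncomputable def gram (M : CoxeterMatrix B) : Matrix B B ℝ := fun i j => - cc (M i j)

open Classical in
/-- simple root -/
noncomputable def sr (i : B) : B → ℝ := Pi.single i 1

/-- the coroot functional -/
noncomputable def ph (M : CoxeterMatrix B) (i : B) : (B → ℝ) →ₗ[ℝ] ℝ :=
  (LinearMap.proj i) ∘ₗ (gram M).mulVecLin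

/-- simple reflection -/
noncomputable def rf (M : CoxeterMatrix B) (i : B) : Module.End ℝ (B → ℝ) :=
  LinearMap.id - (ph M i).smulRight (sr i)

lemma rf_apply (i : B) (v : B → ℝ) : rf M i v = v - ph M i v • sr i := by
  simp [rf]

lemma ph_apply (i : B) (v : B → ℝ) : ph M i v = ∑ j, - cc (M i j) * v j := by
  simp [ph, Matrix.mulVec, dotProduct, gram]

lemma ph_sr (i j : B) : ph M i (sr j) = - cc (M i j) := by
  classical
  rw [ph_apply]
  simp [sr, Pi.single_apply]

lemma ph_sr_self (i : B) : ph M i (sr i) = 2 := by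
  rw [ph_sr, M.diagonal, cc_self]; norm_num

lemma rf_sr_self (i : B) : rf M i (sr i) = - sr i := by
  rw [rf_apply, ph_sr_self]; module

lemma rf_sr (i j : B) : rf M i (sr j) = sr j + cc (M i j) • sr i := by
  rw [rf_apply, ph_sr]; module

lemma rf_mul_self (i : B) : rf M i * rf M i = 1 := by
  ext1 v
  simp only [Module.End.mul_apply, rf_apply, map_sub, map_smul, ph_sr_self, Module.End.one_apply]
  module

lemma rf_rf_pow (i j : B) (h : i ≠ j) (n : ℕ) :
    ((rf M i * rf M j) ^ n) (sr i) =
      UU (M i j) (2 * n + 1) • sr i + UU (M i j) (2 * n) • sr j := by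
  have h1 := M.off_diagonal i j h
  induction n with
  | zero => simp [UU_zero, UU_one h1]
  | succ n ih =>
    rw [pow_succ', Module.End.mul_apply, ih, Module.End.mul_apply]
    simp only [map_add, map_smul, rf_sr_self, rf_sr, map_neg, M.symmetric j i]
    have e1 : UU (M i j) (2 * (n + 1) + 1) = cc (M i j) * UU (M i j) (2 * n + 2)
      - UU (M i j) (2 * n + 1) := UU_rec _ (2 * n + 1)
    have e2 : UU (M i j) (2 * (n + 1)) = cc (M i j) * UU (M i j) (2 * n + 1)
      - UU (M i j) (2 * n) := UU_rec _ (2 * n)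
    have e3 : UU (M i j) (2 * n + 2) = cc (M i j) * UU (M i j) (2 * n + 1)
      - UU (M i j) (2 * n) := UU_rec _ (2 * n)
    rw [e1, e2, e3]
    module

lemma liftable : M.IsLiftable (rf M) := by
  intro i j
  by_cases hij : i = j
  · subst hij
    rw [M.diagonal, pow_one, rf_mul_self]
  by_cases h0 : M i j = 0
  · rw [h0, pow_zero]
  have h1 := M.off_diagonal i j hij
  have hi : ((rf M i * rf M j) ^ M i j) (sr i) = sr i := by
    rw [rf_rf_pow i j hij, UU_two_mul h0, UU_two_mul_add_one h0 h1]; simp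
  have hj : ((rf M j * rf M i) ^ M i j) (sr j) = sr j := by
    rw [rf_rf_pow j i (Ne.symm hij), M.symmetric j i, UU_two_mul h0, UU_two_mul_add_one h0 h1]; simp
  have hinv : (rf M i * rf M j) ^ M i j * (rf M j * rf M i) ^ M i j = 1 := by
    apply pow_mul_pow_eq_one
    rw [mul_assoc, ← mul_assoc (rf M j), rf_mul_self, one_mul, rf_mul_self]
  have hj' : ((rf M i * rf M j) ^ M i j) (sr j) = sr j := by
    conv_lhs => rw [← hj]
    rw [← Module.End.mul_apply, hinv, Module.End.one_apply]
  ext1 v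
  have hd := cc_sq h0 h1
  set c := cc (M i j) with hc
  set p := ph M i v with hp
  set q := ph M j v with hq
  set a := (2 * p + c * q) / (4 - c ^ 2) with ha
  set b := (2 * q + c * p) / (4 - c ^ 2) with hb
  set v0 := v - a • sr i - b • sr j with hv0
  have f1 : ph M i v0 = 0 := by
    simp only [hv0, map_sub, map_smul, ph_sr_self, ph_sr, smul_eq_mul, ← hp, ← hc, ha, hb]
    field_simp; ring
  have f2 : ph M j v0 = 0 := by
    simp only [hv0, map_sub, map_smul, ph_sr_self, ph_sr, smul_eq_mul, ← hq, M.symmetric j i,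
      ← hc, ha, hb]
    field_simp; ring
  have g : ∀ n : ℕ, ((rf M i * rf M j) ^ n) v0 = v0 := by
    intro n
    induction n with
    | zero => simp
    | succ n ih =>
      rw [pow_succ, Module.End.mul_apply, Module.End.mul_apply, rf_apply j, f2, zero_smul, sub_zero,
        rf_apply i, f1, zero_smul, sub_zero, ih]
  have hv : v = v0 + a • sr i + b • sr j := by rw [hv0]; module
  rw [hv, map_add, map_add, map_smul, map_smul, hi, hj', g, Module.End.one_apply]

/-- The geometric representation. -/
noncomputable def rho : W →* Module.End ℝ (B → ℝ) := cs.lift ⟨rf M, liftable⟩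

lemma rho_simple (i : B) : rho cs (cs.simple i) = rf M i := cs.lift_apply_simple liftable i

lemma rho_inv_apply (w : W) (v : B → ℝ) : rho cs w⁻¹ (rho cs w v) = v := by
  rw [← Module.End.mul_apply, ← map_mul, inv_mul_cancel, map_one, Module.End.one_apply]

lemma rho_apply_inv (w : W) (v : B → ℝ) : rho cs w (rho cs w⁻¹ v) = v := by
  rw [← Module.End.mul_apply, ← map_mul, mul_inv_cancel, map_one, Module.End.one_apply]

lemma sr_nonneg (i : B) : 0 ≤ sr i := by
  classical
  intro j
  simp only [sr, Pi.single_apply, Pi.zero_apply]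
  split_ifs <;> norm_num

lemma rho_alt (i j : B) (h : i ≠ j) (k : ℕ) (hk : M i j = 0 ∨ k + 1 ≤ M i j) :
    ∃ a b : ℝ, 0 ≤ a ∧ 0 ≤ b ∧
      rho cs (cs.wordProd (alternatingWord i j k)) (sr i) = a • sr i + b • sr j := by
  have h1 := M.off_diagonal i j h
  rw [prod_alternatingWord_eq_mul_pow]
  rcases Nat.even_or_odd' k with ⟨n, rfl | rfl⟩
  · refine ⟨UU (M i j) (2 * n + 1), UU (M i j) (2 * n), UU_nonneg h1 hk,
      UU_nonneg h1 (by omega), ?_⟩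
    have : 2 * n / 2 = n := by omega
    simp [this, rho_simple, rf_rf_pow i j h]
  · refine ⟨UU (M i j) (2 * n + 1), UU (M i j) (2 * n + 2), UU_nonneg h1 (by omega),
      UU_nonneg h1 hk, ?_⟩
    have : (2 * n + 1) / 2 = n := by omega
    have h3 : ¬ Even (2 * n + 1) := by simp
    rw [if_neg h3, this, map_mul, map_pow, map_mul, rho_simple, rho_simple, Module.End.mul_apply,
      rf_rf_pow i j h]
    simp only [map_add, map_smul, rf_sr_self, rf_sr, M.symmetric j i, UU_rec]
    module

theorem pos_of_lt (n : ℕ) : ∀ (w : W) (i : B), cs.length w = n →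
    cs.length w < cs.length (w * cs.simple i) → 0 ≤ rho cs w (sr i) := by
  induction n using Nat.strong_induction_on with
  | _ n ih =>
  intro w i hw hi
  by_cases hw1 : w = 1
  · subst hw1
    simpa using sr_nonneg i
  obtain ⟨j, hj⟩ := cs.exists_rightDescent_of_ne_one hw1
  rw [IsRightDescent] at hj
  have hij : i ≠ j := by
    rintro rfl
    omega
  classical
  let P : ℕ → Prop := fun k =>
    ∃ v, w = v * cs.wordProd (alternatingWord i j k) ∧ cs.length w = cs.length v + k
  have hP1 : P 1 := by
    refine ⟨w * cs.simple j, ?_, ?_⟩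
    · simp [alternatingWord]
    · rcases cs.length_mul_simple w j with h | h <;> omega
  have hwpos : 1 ≤ cs.length w := by omega
  set k := Nat.findGreatest P (cs.length w) with hk
  have hPk : P k := Nat.findGreatest_spec hwpos hP1
  have hk1 : 1 ≤ k := Nat.le_findGreatest hwpos hP1
  have hkmax : ¬ P (k + 1) := by
    intro h
    have : k + 1 ≤ cs.length w := by
      obtain ⟨v, -, h⟩ := h
      omega
    have := Nat.le_findGreatest this h
    omega
  obtain ⟨v, hv, hl⟩ := hPk
  obtain ⟨k', hk'⟩ : ∃ k', k = k' + 1 := ⟨k - 1, by omega⟩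
  have hu0 : cs.length v < cs.length (v * cs.simple (if Even k then j else i)) := by
    by_contra hcon
    apply hkmax
    refine ⟨v * cs.simple (if Even k then j else i), ?_, ?_⟩
    · rw [alternatingWord_succ', wordProd_cons, mul_assoc, simple_mul_simple_cancel_left]
      exact hv
    · rcases cs.length_mul_simple v (if Even k then j else i) with h | h <;> omega
  have hu1 : cs.length v < cs.length (v * cs.simple (if Even k' then j else i)) := by
    by_contra hcon
    have e : w = (v * cs.simple (if Even k' then j else i)) *
        cs.wordProd (alternatingWord i j k') := by
      rw [hv, hk', alternatingWord_succ', wordProd_cons, mul_assoc]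
    have l1 := cs.length_mul_le (v * cs.simple (if Even k' then j else i))
      (cs.wordProd (alternatingWord i j k'))
    rw [← e] at l1
    have l2 := cs.length_wordProd_le (alternatingWord i j k')
    rw [length_alternatingWord] at l2
    rcases cs.length_mul_simple v (if Even k' then j else i) with h | h <;> omega
  have hboth : cs.length v < cs.length (v * cs.simple i) ∧
      cs.length v < cs.length (v * cs.simple j) := by
    by_cases he : Even k'
    · have : ¬ Even k := by rw [hk']; simp [he, parity_simps]
      rw [if_neg this] at hu0
      rw [if_pos he] at hu1
      exact ⟨hu0, hu1⟩
    · have : Even k := by rw [hk']; simp [he, parity_simps]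
      rw [if_pos this] at hu0
      rw [if_neg he] at hu1
      exact ⟨hu1, hu0⟩
  have hkM : M i j = 0 ∨ k + 1 ≤ M i j := by
    by_contra! hcon
    have e : w * cs.simple i = v * cs.wordProd (alternatingWord j i (k + 1)) := by
      rw [alternatingWord_succ, wordProd_concat, ← mul_assoc, ← hv]
    have l1 := cs.not_isReduced_alternatingWord j i (m := k + 1)
      (by rw [M.symmetric]; exact hcon.1) (by rw [M.symmetric]; exact hcon.2)
    have l2 := cs.length_wordProd_le (alternatingWord j i (k + 1))
    rw [CoxeterSystem.IsReduced] at l1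
    rw [length_alternatingWord] at l1 l2
    have l3 := cs.length_mul_le v (cs.wordProd (alternatingWord j i (k + 1)))
    rw [← e] at l3
    omega
  obtain ⟨a, b, ha, hb, hab⟩ := rho_alt cs i j hij k hkM
  have hvi := ih (cs.length v) (by omega) v i rfl hboth.1
  have hvj := ih (cs.length v) (by omega) v j rfl hboth.2
  rw [hv, map_mul, Module.End.mul_apply, hab, map_add, map_smul, map_smul]
  exact add_nonneg (smul_nonneg ha hvi) (smul_nonneg hb hvj)

lemma neg_of_gt (w : W) (i : B) (h : cs.length (w * cs.simple i) < cs.length w) :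
    rho cs w (sr i) ≤ 0 := by
  have := pos_of_lt cs _ (w * cs.simple i) i rfl (by rwa [simple_mul_simple_cancel_right])
  rw [map_mul, Module.End.mul_apply, rho_simple, rf_sr_self, map_neg] at this
  exact neg_nonneg.mp this

/-- Roots of the geometric representation. -/
def IsRt (v : B → ℝ) : Prop := ∃ (w : W) (i : B), v = rho cs w (sr i)

lemma IsRt.sign {v : B → ℝ} (h : IsRt cs v) : 0 ≤ v ∨ v ≤ 0 := by
  obtain ⟨w, i, rfl⟩ := h
  rcases cs.length_mul_simple w i with h | h
  · exact Or.inl (pos_of_lt cs _ w i rfl (by omega))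
  · exact Or.inr (neg_of_gt cs w i (by omega))

lemma IsRt.sr (i : B) : IsRt cs (sr i) := ⟨1, i, by simp⟩

lemma IsRt.rf {v : B → ℝ} (h : IsRt cs v) (i : B) : IsRt cs (rf M i v) := by
  obtain ⟨w, j, rfl⟩ := h
  exact ⟨cs.simple i * w, j, by rw [map_mul, Module.End.mul_apply, rho_simple]⟩

lemma IsRt.neg {v : B → ℝ} (h : IsRt cs v) : IsRt cs (-v) := by
  obtain ⟨w, j, rfl⟩ := h
  exact ⟨w * cs.simple j, j, by
    rw [map_mul, Module.End.mul_apply, rho_simple, rf_sr_self, map_neg]⟩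

/-- The invariant quadratic form. -/
noncomputable def qf (M : CoxeterMatrix B) (v : B → ℝ) : ℝ := ∑ i, v i * ph M i v

lemma sum_sr (f : B → ℝ) (i : B) : ∑ j, sr i j * f j = f i := by
  classical
  simp [CoxGeom.sr, Pi.single_apply]

lemma sum_ph_sr (v : B → ℝ) (i : B) : ∑ j, v j * ph M j (sr i) = ph M i v := by
  rw [ph_apply]
  apply Finset.sum_congr rfl
  intro j _
  rw [ph_sr, M.symmetric j i]; ring

lemma qf_sr (i : B) : qf M (sr i) = 2 := by
  rw [qf, sum_sr, ph_sr_self]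

lemma qf_smul (c : ℝ) (v : B → ℝ) : qf M (c • v) = c ^ 2 * qf M v := by
  simp only [qf, map_smul, Pi.smul_apply, smul_eq_mul, Finset.mul_sum]
  apply Finset.sum_congr rfl
  intro j _
  ring

lemma qf_rf (i : B) (v : B → ℝ) : qf M (rf M i v) = qf M v := by
  have h1 := sum_sr (fun j => ph M j v) i
  have h2 := sum_ph_sr (M := M) v i
  have h3 := sum_sr (fun j => ph M j (sr i)) i
  set p := ph M i v with hp
  have : qf M (rf M i v) = qf M v - p * (∑ j, sr i j * ph M j v) - p * (∑ j, v j * ph M j (sr i))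
      + p ^ 2 * ∑ j, sr i j * ph M j (sr i) := by
    simp only [qf, rf_apply, map_sub, map_smul, Pi.sub_apply, Pi.smul_apply, smul_eq_mul,
      Finset.mul_sum, ← Finset.sum_sub_distrib, ← Finset.sum_add_distrib]
    apply Finset.sum_congr rfl
    intro j _
    ring
  rw [this, h1, h2, h3, ph_sr_self]
  ring

lemma qf_rho (w : W) (v : B → ℝ) : qf M (rho cs w v) = qf M v := by
  induction w using cs.simple_induction_left with
  | one => simp
  | mul_simple_left w i ih => rw [map_mul, Module.End.mul_apply, rho_simple, qf_rf, ih]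

lemma IsRt.qf {v : B → ℝ} (h : IsRt cs v) : qf M v = 2 := by
  obtain ⟨w, i, rfl⟩ := h
  rw [qf_rho, qf_sr]

lemma IsRt.ne_zero {v : B → ℝ} (h : IsRt cs v) : v ≠ 0 := by
  rintro rfl
  have := IsRt.qf cs h
  simp [CoxGeom.qf] at this

lemma IsRt.nonneg_of_pos {v : B → ℝ} (h : IsRt cs v) (j : B) (hj : 0 < v j) : 0 ≤ v := by
  rcases IsRt.sign cs h with h | h
  · exact h
  · have := h j
    simp only [Pi.zero_apply] at this
    linarith

lemma sr_self (i : B) : (sr i : B → ℝ) i = 1 := by simp [CoxGeom.sr]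

lemma sr_ne {i j : B} (h : j ≠ i) : (sr i : B → ℝ) j = 0 := by simp [CoxGeom.sr, h]

lemma rf_coord_ne {i j : B} (h : j ≠ i) (v : B → ℝ) : rf M i v j = v j := by
  rw [rf_apply]; simp [sr_ne h]

lemma rf_coord_self (i : B) (v : B → ℝ) : rf M i v i = v i - ph M i v := by
  rw [rf_apply]; simp [sr_self]

lemma rf_rf (i : B) (v : B → ℝ) : rf M i (rf M i v) = v := by
  rw [← Module.End.mul_apply, rf_mul_self, Module.End.one_apply]

lemma IsRt.rf_nonneg {v : B → ℝ} (h : IsRt cs v) (h0 : 0 ≤ v) (i : B) (hi : v ≠ CoxGeom.sr i) :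
    0 ≤ CoxGeom.rf M i v := by
  by_cases hj : ∃ j, j ≠ i ∧ 0 < v j
  · obtain ⟨j, hji, hj⟩ := hj
    apply IsRt.nonneg_of_pos cs (IsRt.rf cs h i) j
    rwa [rf_coord_ne hji]
  · exfalso
    push Not at hj
    have e : v = v i • CoxGeom.sr i := by
      ext j
      by_cases hji : j = i
      · subst hji; simp [sr_self]
      · have h1 := hj j hji
        have h2 := h0 j
        simp only [Pi.zero_apply] at h2
        simp [sr_ne hji]
        linarith
    have q := IsRt.qf cs h
    rw [e, qf_smul, qf_sr] at q
    have h2 := h0 i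
    simp only [Pi.zero_apply] at h2
    have : v i = 1 := by nlinarith
    rw [this, one_smul] at e
    exact hi e

/-- Positive roots on which `ξ` is negative. -/
def Neg (ξ : (B → ℝ) →ₗ[ℝ] ℝ) : Set (B → ℝ) := {v | IsRt cs v ∧ 0 ≤ v ∧ ξ v < 0}

/-- The Tits cone. -/
def Tc (ξ : (B → ℝ) →ₗ[ℝ] ℝ) : Prop := (Neg cs ξ).Finite

lemma Tc.add {ξ η : (B → ℝ) →ₗ[ℝ] ℝ} (h : Tc cs ξ) (h' : Tc cs η) : Tc cs (ξ + η) := by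
  apply (Set.Finite.union h h').subset
  rintro v ⟨h1, h2, h3⟩
  rw [LinearMap.add_apply] at h3
  by_cases h4 : ξ v < 0
  · exact Or.inl ⟨h1, h2, h4⟩
  · exact Or.inr ⟨h1, h2, by linarith⟩

lemma Tc.zero : Tc cs (0 : (B → ℝ) →ₗ[ℝ] ℝ) := by
  simp [Tc, Neg]

lemma Tc.sum {ι : Type*} (s : Finset ι) (f : ι → ((B → ℝ) →ₗ[ℝ] ℝ)) (h : ∀ k ∈ s, Tc cs (f k)) :
    Tc cs (∑ k ∈ s, f k) :=
  Finset.sum_induction f (Tc cs) (fun _ _ => Tc.add cs) (Tc.zero cs) h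

lemma Tc.rf {ξ : (B → ℝ) →ₗ[ℝ] ℝ} (h : Tc cs ξ) (i : B) : Tc cs (ξ ∘ₗ CoxGeom.rf M i) := by
  apply ((Set.Finite.image (CoxGeom.rf M i) h).insert (CoxGeom.sr i)).subset
  rintro v ⟨h1, h2, h3⟩
  by_cases hv : v = CoxGeom.sr i
  · exact Or.inl hv
  · refine Or.inr ⟨CoxGeom.rf M i v, ⟨IsRt.rf cs h1 i, IsRt.rf_nonneg cs h1 h2 i hv, h3⟩, rf_rf i v⟩

lemma Tc.rho (w : W) : ∀ {ξ : (B → ℝ) →ₗ[ℝ] ℝ}, Tc cs ξ → Tc cs (ξ ∘ₗ CoxGeom.rho cs w) := by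
  induction w using cs.simple_induction_left with
  | one => intro ξ h; simpa [Module.End.one_eq_id] using h
  | mul_simple_left w i ih =>
    intro ξ h
    have := ih (Tc.rf cs h i)
    rwa [LinearMap.comp_assoc, ← Module.End.mul_eq_comp, ← rho_simple cs, ← map_mul] at this

lemma exists_dominant (n : ℕ) : ∀ ξ : (B → ℝ) →ₗ[ℝ] ℝ, Tc cs ξ → (Neg cs ξ).ncard = n →
    ∃ g : W, ∀ i, 0 ≤ ξ (rho cs g (sr i)) := by
  induction n using Nat.strong_induction_on with
  | _ n ih =>
  intro ξ h hn
  by_cases hd : ∀ i, 0 ≤ ξ (sr i)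
  · exact ⟨1, by simpa using hd⟩
  push Not at hd
  obtain ⟨i, hi⟩ := hd
  have hsub : Neg cs (ξ ∘ₗ rf M i) ⊆ rf M i '' (Neg cs ξ \ {sr i}) := by
    rintro v ⟨h1, h2, h3⟩
    have hv : v ≠ sr i := by
      rintro rfl
      rw [LinearMap.comp_apply, rf_sr_self, map_neg] at h3
      linarith
    refine ⟨rf M i v, ⟨⟨IsRt.rf cs h1 i, IsRt.rf_nonneg cs h1 h2 i hv, h3⟩, ?_⟩, rf_rf i v⟩
    intro he
    rw [Set.mem_singleton_iff] at he
    have : v = - sr i := by rw [← rf_rf (M := M) i v, he, rf_sr_self]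
    have h4 := h2 i
    rw [this] at h4
    simp [sr_self] at h4
    linarith
  have hmem : sr i ∈ Neg cs ξ := ⟨IsRt.sr cs i, sr_nonneg i, hi⟩
  have hlt : (Neg cs (ξ ∘ₗ rf M i)).ncard < n := by
    have f1 : (Neg cs ξ \ {sr i}).Finite := Set.Finite.sdiff h
    have c1 := Set.ncard_le_ncard hsub (f1.image _)
    have c2 := Set.ncard_image_le (f := rf M i) f1
    have c3 := Set.ncard_sdiff_singleton_lt_of_mem hmem h
    omega
  obtain ⟨g, hg⟩ := ih _ hlt _ (Tc.rf cs h i) rfl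
  refine ⟨cs.simple i * g, fun j => ?_⟩
  rw [map_mul, Module.End.mul_apply, rho_simple]
  exact hg j

lemma lin_expand (ξ : (B → ℝ) →ₗ[ℝ] ℝ) (v : B → ℝ) : ξ v = ∑ j, v j * ξ (sr j) := by
  have : v = ∑ j, v j • sr j := by
    ext k
    rw [Finset.sum_apply]
    classical
    simp [CoxGeom.sr, Pi.single_apply]
  conv_lhs => rw [this]
  simp [map_sum, map_smul]

lemma dom_nonneg {ξ : (B → ℝ) →ₗ[ℝ] ℝ} (h : ∀ i, 0 ≤ ξ (sr i)) {v : B → ℝ} (hv : 0 ≤ v) :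
    0 ≤ ξ v := by
  rw [lin_expand]
  exact Finset.sum_nonneg fun j _ => mul_nonneg (hv j) (h j)

lemma stab_mem {ξ : (B → ℝ) →ₗ[ℝ] ℝ} (h : ∀ i, 0 ≤ ξ (sr i)) (n : ℕ) : ∀ w : W,
    cs.length w = n → (∀ v, ξ (rho cs w v) = ξ v) → w ∈ stdParabolic cs {i | ξ (sr i) = 0} := by
  induction n using Nat.strong_induction_on with
  | _ n ih =>
  intro w hn hw
  by_cases hw1 : w = 1
  · subst hw1; exact one_mem _
  obtain ⟨i, hi⟩ := cs.exists_rightDescent_of_ne_one hw1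
  rw [IsRightDescent] at hi
  have h1 := neg_of_gt cs w i hi
  have h2 : ξ (sr i) = 0 := by
    have h3 := dom_nonneg h (neg_nonneg.mpr h1)
    rw [map_neg, hw] at h3
    have := h i
    linarith
  have h4 := ih _ (hn ▸ hi) (w * cs.simple i) rfl (by
    intro v
    rw [map_mul, Module.End.mul_apply, hw, rho_simple, rf_apply, map_sub, map_smul, h2]
    simp)
  have h5 : cs.simple i ∈ stdParabolic cs {i | ξ (sr i) = 0} :=
    Subgroup.subset_closure ⟨i, h2, rfl⟩
  have := mul_mem h4 h5
  rwa [simple_mul_simple_cancel_right] at this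

lemma fix_of_mem {ξ : (B → ℝ) →ₗ[ℝ] ℝ} {J : Set B} (h : ∀ i ∈ J, ξ (sr i) = 0) {w : W}
    (hw : w ∈ stdParabolic cs J) : ∀ v, ξ (rho cs w v) = ξ v := by
  rw [stdParabolic] at hw
  induction hw using Subgroup.closure_induction with
  | mem x hx =>
    obtain ⟨i, hi, rfl⟩ := hx
    intro v
    rw [rho_simple, rf_apply, map_sub, map_smul, h i hi]
    simp
  | one => simp
  | mul x y _ _ hx hy => intro v; rw [map_mul, Module.End.mul_apply, hx, hy]
  | inv x _ hx => intro v; rw [← hx, rho_apply_inv]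

/-- positive roots with `i` in the support -/
def Rsup (i : B) : Set (B → ℝ) := {v | IsRt cs v ∧ 0 ≤ v ∧ 0 < v i}

lemma Rsup_step {s t : B} (hst : s ≠ t) (h2 : M s t ≠ 2) (hs : (Rsup cs s).Finite) :
    (Rsup cs t).Finite := by
  apply (hs.union (hs.image (rf M s))).subset
  rintro v ⟨h1, h0, ht⟩
  by_cases hvs : 0 < v s
  · exact Or.inl ⟨h1, h0, hvs⟩
  right
  have hvs0 : v s = 0 := by
    have := h0 s
    simp only [Pi.zero_apply] at this
    linarith
  have hpos : 0 < rf M s v s := by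
    rw [rf_coord_self, hvs0, ph_apply, zero_sub, ← Finset.sum_neg_distrib]
    apply Finset.sum_pos'
    · intro j _
      by_cases hj : s = j
      · subst hj; simp [hvs0]
      · have a := cc_nonneg (M.off_diagonal s j hj)
        have b := h0 j
        simp only [Pi.zero_apply] at b
        have := mul_nonneg a b
        linarith
    · refine ⟨t, Finset.mem_univ _, ?_⟩
      have := mul_pos (cc_pos (M.off_diagonal s t hst) h2) ht
      linarith
  exact ⟨rf M s v, ⟨IsRt.rf cs h1 s, IsRt.nonneg_of_pos cs (IsRt.rf cs h1 s) s hpos, hpos⟩,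
    rf_rf s v⟩

lemma finite_of_roots (h : {v | IsRt cs v}.Finite) : Finite W := by
  have : Finite {v | IsRt cs v} := h
  let f : W → (B → {v | IsRt cs v}) := fun w i => ⟨rho cs w (sr i), w, i, rfl⟩
  apply Finite.of_injective f
  intro w w' hww
  have h1 : ∀ i, rho cs w (sr i) = rho cs w' (sr i) := by
    intro i
    exact congrArg Subtype.val (congrFun hww i)
  by_contra hne
  have h2 : w'⁻¹ * w ≠ 1 := by
    intro h
    exact hne (inv_mul_eq_one.mp h).symm
  obtain ⟨i, hi⟩ := cs.exists_rightDescent_of_ne_one h2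
  have h3 := neg_of_gt cs _ i hi
  rw [map_mul, Module.End.mul_apply, h1, rho_inv_apply] at h3
  have := h3 i
  simp [sr_self] at this
  linarith

lemma no_line_dom [Infinite W] (hirr : CoxIrreducible M) {ξ : (B → ℝ) →ₗ[ℝ] ℝ}
    (h : ∀ i, 0 ≤ ξ (sr i)) (h2 : Tc cs (-ξ)) : ξ = 0 := by
  by_contra hne
  obtain ⟨s, hs⟩ : ∃ s, 0 < ξ (sr s) := by
    by_contra! hcon
    apply hne
    ext1 v
    rw [lin_expand]
    have : ∀ j, ξ (sr j) = 0 := fun j => le_antisymm (hcon j) (h j)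
    simp [this]
  have hsI : (Rsup cs s).Finite := by
    apply Set.Finite.subset h2
    rintro v ⟨h1, h0, hvs⟩
    refine ⟨h1, h0, ?_⟩
    rw [LinearMap.neg_apply, lin_expand, neg_lt_zero]
    exact Finset.sum_pos' (fun j _ => mul_nonneg (h0 j) (h j)) ⟨s, Finset.mem_univ _, mul_pos hvs hs⟩
  have hI : {i | (Rsup cs i).Finite} = Set.univ := by
    refine (hirr {i | (Rsup cs i).Finite} ?_).resolve_left (Set.nonempty_iff_ne_empty.mp ⟨s, hsI⟩)
    intro i hi j hj
    by_contra hij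
    refine hj (Rsup_step cs ?_ hij hi)
    rintro rfl
    exact hj hi
  have hpos : (⋃ i, Rsup cs i).Finite := Set.finite_iUnion fun i => by
    have : i ∈ {i | (Rsup cs i).Finite} := hI ▸ Set.mem_univ i
    exact this
  have key : ∀ v, IsRt cs v → 0 ≤ v → v ∈ ⋃ i, Rsup cs i := by
    intro v hv h0
    by_contra hcon
    apply IsRt.ne_zero cs hv
    ext i
    by_contra hi
    exact hcon (Set.mem_iUnion.mpr ⟨i, hv, h0, lt_of_le_of_ne (h0 i) (Ne.symm hi)⟩)
  have hall : {v | IsRt cs v}.Finite := by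
    apply (hpos.union (hpos.image (fun v => -v))).subset
    intro v hv
    rcases IsRt.sign cs hv with h0 | h0
    · exact Or.inl (key v hv h0)
    · exact Or.inr ⟨-v, key _ (IsRt.neg cs hv) (neg_nonneg.mpr h0), neg_neg v⟩
  have := finite_of_roots cs hall
  exact not_finite W

lemma no_line [Infinite W] (hirr : CoxIrreducible M) {ξ : (B → ℝ) →ₗ[ℝ] ℝ}
    (h : Tc cs ξ) (h2 : Tc cs (-ξ)) : ξ = 0 := by
  obtain ⟨g, hg⟩ := exists_dominant cs _ ξ h rfl
  have h3 : Tc cs (-(ξ ∘ₗ rho cs g)) := by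
    have := Tc.rho cs g h2
    rwa [LinearMap.neg_comp] at this
  have := no_line_dom cs hirr (ξ := ξ ∘ₗ rho cs g) hg h3
  ext1 v
  have := LinearMap.congr_fun this (rho cs g⁻¹ v)
  rwa [LinearMap.comp_apply, rho_apply_inv] at this

end CoxGeom

open CoxGeom

/-- In an infinite irreducible Coxeter group of finite rank, every power of an essential
element is essential. -/
theorem stmt_14 {B W : Type*} [Group W] [Fintype B] [Infinite W]
    {M : CoxeterMatrix B} (cs : CoxeterSystem M W) (hirr : CoxIrreducible M)
    (x : W) (hx : Essential cs x) (m : ℕ) (hm : 0 < m) :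
    Essential cs (x ^ m) := by
  classical
  intro P hP hxP
  obtain ⟨J, w, hJ⟩ := hP
  by_contra hPtop
  have hJu : ∃ j, j ∉ J := by
    by_contra! hcon
    apply hPtop
    rw [eq_top_iff]
    intro z _
    rw [hJ]
    have : J = Set.univ := Set.eq_univ_of_forall hcon
    rw [stdParabolic, this, Set.image_univ, cs.subgroup_closure_range_simple]
    trivial
  obtain ⟨j₀, hj₀⟩ := hJu
  set y := w⁻¹ * x * w with hy
  have hym : y ^ m ∈ stdParabolic cs J := by
    have h1 := (hJ _).mp hxP
    have h2 : y ^ m = w⁻¹ * x ^ m * w := by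
      have := conj_pow (i := m) (a := w⁻¹) (b := x)
      rwa [inv_inv] at this
    rwa [h2]
  let ξ : (B → ℝ) →ₗ[ℝ] ℝ := ∑ i, if i ∈ J then 0 else LinearMap.proj i
  have hξ : ∀ v, ξ v = ∑ i, if i ∈ J then 0 else v i := by
    intro v
    simp only [ξ, LinearMap.sum_apply]
    apply Finset.sum_congr rfl
    intro i _
    split_ifs <;> simp
  have hξJ : ∀ i ∈ J, ξ (sr i) = 0 := by
    intro i hi
    rw [hξ]
    apply Finset.sum_eq_zero
    intro k _
    split_ifs with hk
    · rfl
    · exact sr_ne (by rintro rfl; exact hk hi)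
  have hξnn : ∀ v, 0 ≤ v → 0 ≤ ξ v := by
    intro v hv
    rw [hξ]
    apply Finset.sum_nonneg
    intro i _
    split_ifs
    · exact le_rfl
    · exact hv i
  have hξ0 : ξ ≠ 0 := by
    intro h0
    have h1 : 0 < ξ (sr j₀) := by
      rw [hξ]
      apply Finset.sum_pos'
      · intro i _
        split_ifs
        · exact le_rfl
        · exact sr_nonneg j₀ i
      · exact ⟨j₀, Finset.mem_univ _, by rw [if_neg hj₀, sr_self]; norm_num⟩
    rw [h0] at h1
    simp at h1
  have hξT : Tc cs ξ := by
    have : Neg cs ξ = ∅ := by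
      rw [Set.eq_empty_iff_forall_notMem]
      rintro v ⟨_, h0, h1⟩
      have := hξnn v h0
      linarith
    rw [Tc, this]
    exact Set.finite_empty
  have hfix : ξ ∘ₗ rho cs (y ^ m) = ξ := by
    refine LinearMap.ext fun v => ?_
    exact fix_of_mem cs hξJ hym v
  set η : (B → ℝ) →ₗ[ℝ] ℝ := ∑ k ∈ Finset.range m, ξ ∘ₗ rho cs (y ^ k) with hη
  have hηT : Tc cs η := Tc.sum cs _ _ fun k _ => Tc.rho cs _ hξT
  obtain ⟨n, rfl⟩ : ∃ n, m = n + 1 := ⟨m - 1, by omega⟩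
  have hone : ξ ∘ₗ rho cs (y ^ 0) = ξ := by
    refine LinearMap.ext fun v => ?_
    simp
  have hη0 : η ≠ 0 := by
    intro h0
    apply hξ0
    apply no_line cs hirr hξT
    rw [hη, Finset.sum_range_succ', hone] at h0
    rw [← eq_neg_of_add_eq_zero_left h0]
    exact Tc.sum cs _ _ fun k _ => Tc.rho cs _ hξT
  have hηy : ∀ v, η (rho cs y v) = η v := by
    have h1 : η ∘ₗ rho cs y = ∑ k ∈ Finset.range (n + 1), ξ ∘ₗ rho cs (y ^ (k + 1)) := by
      refine LinearMap.ext fun v => ?_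
      simp [hη, LinearMap.sum_apply, pow_succ]
    have h2 : η ∘ₗ rho cs y = η := by
      rw [h1, Finset.sum_range_succ, hfix, hη, Finset.sum_range_succ', hone]
    intro v
    exact LinearMap.congr_fun h2 v
  obtain ⟨g, hg⟩ := exists_dominant cs _ η hηT rfl
  set ζ := η ∘ₗ rho cs g with hζ
  have hmem : g⁻¹ * y * g ∈ stdParabolic cs {i | ζ (sr i) = 0} := by
    apply stab_mem cs (ξ := ζ) hg _ _ rfl
    intro v
    simp only [hζ, LinearMap.comp_apply, map_mul, Module.End.mul_apply, rho_apply_inv, hηy]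
  have htop := hx ((stdParabolic cs {i | ζ (sr i) = 0}).map (MulAut.conj (w * g)).toMonoidHom)
    ⟨{i | ζ (sr i) = 0}, w * g, by
      intro z
      rw [Subgroup.mem_map]
      constructor
      · rintro ⟨u, hu, rfl⟩
        simpa [mul_assoc] using hu
      · intro hz
        exact ⟨_, hz, by simp [mul_assoc]⟩⟩
    ⟨_, hmem, by simp [hy, mul_assoc]⟩
  have hall : ∀ i, ζ (sr i) = 0 := by
    intro i
    have h1 : (w * g) * cs.simple i * (w * g)⁻¹ ∈
        (stdParabolic cs {i | ζ (sr i) = 0}).map (MulAut.conj (w * g)).toMonoidHom := by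
      rw [htop]; trivial
    obtain ⟨u, hu, hue⟩ := h1
    have hu' : u = cs.simple i := by
      simpa [mul_assoc] using hue
    rw [hu'] at hu
    have h2 := fix_of_mem cs (ξ := ζ) (J := {i | ζ (sr i) = 0}) (fun i hi => hi) hu (sr i)
    rw [rho_simple, rf_sr_self, map_neg] at h2
    linarith
  apply hη0
  refine LinearMap.ext fun v => ?_
  have h3 : ζ (rho cs g⁻¹ v) = 0 := by
    rw [lin_expand]
    simp [hall]
  rwa [hζ, LinearMap.comp_apply, rho_apply_inv] at h3
end
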